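/- arXiv:2107.14268 — 4 statements merged into one kernel-verified Lean document; each statement's English description precedes it below -/
import Mathlib

section
/- The image ι(𝒞) is dense in the virtual path space 𝓒. -/
/-- The path space 𝒞: sequences on ℕ₀ = {0,1,2,...} for which the cemetery state 0 is
absorbing, as a subset of ℕ₀^ℕ₀ with the product topology (ℕ₀ discrete). -/
def PathSpace : Set (ℕ → ℕ) := {x | ∀ i j : ℕ, i ≤ j → x i = 0 → x j = 0}

/-- The path space 𝒞_N: paths taking values in {0,...,N}. -/
def PathSpaceN (N : ℕ) : Set (ℕ → ℕ) := {x | x ∈ PathSpace ∧ ∀ i, x i ≤ N}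

/-- The successive indices I_{x,N}(j) (valued in ℕ∞) at which the path `x` visits the set
{0,...,N}; here `inf ∅ = ⊤ = ∞`. -/
noncomputable def hitIdx (x : ℕ → ℕ) (N : ℕ) : ℕ → ℕ∞
  | 0 => sInf {e : ℕ∞ | ∃ i : ℕ, e = (i : ℕ∞) ∧ x i ≤ N}
  | j + 1 => sInf {e : ℕ∞ | ∃ i : ℕ, e = (i : ℕ∞) ∧ hitIdx x N j < (i : ℕ∞) ∧ x i ≤ N}

/-- The projection P_N : 𝒞 → 𝒞_N: `(P_N x)(j) = x(I_{x,N}(j))` if `I_{x,N}(j) < ∞`,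
and `0` otherwise. -/
noncomputable def proj (N : ℕ) (x : ℕ → ℕ) (j : ℕ) : ℕ :=
  if hitIdx x N j = ⊤ then 0 else x (hitIdx x N j).toNat

/-- The virtual path space 𝓒, indexed by ℕ = {1,2,...} (as `ℕ+`), with the product
topology. -/
def VirtualPathSpace : Set (ℕ+ → ℕ → ℕ) :=
  {x | (∀ N : ℕ+, x N ∈ PathSpaceN N) ∧ ∀ N : ℕ+, proj N (x (N + 1)) = x N}

theorem hit_fwd (x : ℕ → ℕ) (N : ℕ) : ∀ j n : ℕ, hitIdx x N j = (n : ℕ∞) →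
    x n ≤ N ∧ Nat.count (fun i => x i ≤ N) n = j := by
  intro j
  induction j with
  | zero =>
    intro n h
    rw [hitIdx] at h
    have hne : {e : ℕ∞ | ∃ i : ℕ, e = (i : ℕ∞) ∧ x i ≤ N}.Nonempty := by
      by_contra hc
      rw [Set.not_nonempty_iff_eq_empty] at hc
      rw [hc, sInf_empty] at h
      exact ENat.natCast_ne_top n h.symm
    have hm := csInf_mem hne
    rw [h] at hm
    obtain ⟨i, hi, hx⟩ := hm
    have : n = i := by exact_mod_cast hi
    subst this
    refine ⟨hx, ?_⟩
    rw [Nat.count_iff_forall_not]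
    intro k hk hxk
    have : sInf {e : ℕ∞ | ∃ i : ℕ, e = (i : ℕ∞) ∧ x i ≤ N} ≤ (k : ℕ∞) := sInf_le ⟨k, rfl, hxk⟩
    rw [h] at this
    have : n ≤ k := by exact_mod_cast this
    omega
  | succ j ih =>
    intro n h
    rw [hitIdx] at h
    have hne : {e : ℕ∞ | ∃ i : ℕ, e = (i : ℕ∞) ∧ hitIdx x N j < (i : ℕ∞) ∧ x i ≤ N}.Nonempty := by
      by_contra hc
      rw [Set.not_nonempty_iff_eq_empty] at hc
      rw [hc, sInf_empty] at h
      exact ENat.natCast_ne_top n h.symm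
    have hm := csInf_mem hne
    rw [h] at hm
    obtain ⟨i, hi, hlt, hx⟩ := hm
    have : n = i := by exact_mod_cast hi
    subst this
    refine ⟨hx, ?_⟩
    obtain ⟨m, hm⟩ := ENat.ne_top_iff_exists.mp (ne_top_of_lt hlt)
    obtain ⟨h1, h2⟩ := ih m hm.symm
    rw [← hm] at hlt
    have hmn : m < n := by exact_mod_cast hlt
    obtain ⟨d, rfl⟩ := Nat.exists_eq_add_of_le (Nat.succ_le_of_lt hmn)
    rw [Nat.count_add, Nat.count_succ, h2, if_pos h1]
    have : Nat.count (fun k => x (m.succ + k) ≤ N) d = 0 := by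
      rw [Nat.count_iff_forall_not]
      intro k hk hxk
      have : sInf {e : ℕ∞ | ∃ i : ℕ, e = (i : ℕ∞) ∧ hitIdx x N j < (i : ℕ∞) ∧ x i ≤ N}
          ≤ ((m.succ + k : ℕ) : ℕ∞) := by
        refine sInf_le ⟨m.succ + k, rfl, ?_, hxk⟩
        rw [← hm]
        exact_mod_cast (by omega : m < m.succ + k)
      rw [h] at this
      have : m.succ + d ≤ m.succ + k := by exact_mod_cast this
      omega
    omega

theorem exists_count {p : ℕ → Prop} [DecidablePred p] (j : ℕ) : ∀ n, j < Nat.count p n →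
    ∃ m < n, p m ∧ Nat.count p m = j := by
  intro n
  induction n with
  | zero => simp
  | succ n ih =>
    intro h
    rw [Nat.count_succ] at h
    by_cases hj : j < Nat.count p n
    · obtain ⟨m, h1, h2⟩ := ih hj
      exact ⟨m, by omega, h2⟩
    · split_ifs at h with hp
      · exact ⟨n, by omega, hp, by omega⟩
      · omega

theorem hit_bwd (x : ℕ → ℕ) (N : ℕ) : ∀ j n : ℕ, x n ≤ N →
    Nat.count (fun i => x i ≤ N) n = j → hitIdx x N j = (n : ℕ∞) := by
  intro j
  have key : ∀ n : ℕ, x n ≤ N → Nat.count (fun i => x i ≤ N) n = j → hitIdx x N j ≤ (n : ℕ∞) →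
      hitIdx x N j = (n : ℕ∞) := by
    intro n hn hc hle
    obtain ⟨m, hm⟩ := ENat.ne_top_iff_exists.mp (ne_top_of_le_ne_top (ENat.natCast_ne_top n) hle)
    obtain ⟨h1, h2⟩ := hit_fwd x N j m hm.symm
    rw [← hm, Nat.count_injective (p := fun i => x i ≤ N) h1 hn (h2.trans hc.symm)]
  induction j with
  | zero =>
    intro n hn hc
    apply key n hn hc
    rw [hitIdx]
    exact sInf_le ⟨n, rfl, hn⟩
  | succ j ih =>
    intro n hn hc
    apply key n hn hc
    obtain ⟨m, hm, hpm, hcm⟩ := exists_count (p := fun i => x i ≤ N) j n (by omega)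
    rw [hitIdx]
    refine sInf_le ⟨n, rfl, ?_, hn⟩
    have h3 : hitIdx x N j = (m : ℕ∞) := by
      obtain hle : hitIdx x N j ≤ (m : ℕ∞) := by
        cases j with
        | zero => rw [hitIdx]; exact sInf_le ⟨m, rfl, hpm⟩
        | succ j => exact (ih (by
            intro n hn hc hle
            obtain ⟨m, hm⟩ := ENat.ne_top_iff_exists.mp
              (ne_top_of_le_ne_top (ENat.natCast_ne_top n) hle)
            obtain ⟨h1, h2⟩ := hit_fwd x N _ m hm.symm
            rw [← hm, Nat.count_injective (p := fun i => x i ≤ N) h1 hn (h2.trans hc.symm)])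
            m hpm hcm).le
      obtain ⟨m', hm'⟩ := ENat.ne_top_iff_exists.mp
        (ne_top_of_le_ne_top (ENat.natCast_ne_top m) hle)
      obtain ⟨h1, h2⟩ := hit_fwd x N j m' hm'.symm
      rw [← hm', Nat.count_injective (p := fun i => x i ≤ N) h1 hpm (h2.trans hcm.symm)]
    rw [h3]
    exact_mod_cast hm

theorem proj_of (x : ℕ → ℕ) (N j n : ℕ) (h : x n ≤ N)
    (hc : Nat.count (fun i => x i ≤ N) n = j) : proj N x j = x n := by
  simp [proj, hit_bwd x N j n h hc]

theorem of_proj (x : ℕ → ℕ) (N j : ℕ) (h : proj N x j ≠ 0) :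
    ∃ n, x n = proj N x j ∧ x n ≤ N ∧ Nat.count (fun i => x i ≤ N) n = j := by
  by_cases ht : hitIdx x N j = ⊤
  · simp [proj, ht] at h
  · obtain ⟨m, hm⟩ := ENat.ne_top_iff_exists.mp ht
    refine ⟨m, ?_, hit_fwd x N j m hm.symm⟩
    simp [proj, ← hm]

theorem count_proj (x : ℕ → ℕ) (K M : ℕ) (hKM : K ≤ M) (m : ℕ) :
    Nat.count (fun i => proj M x i ≤ K) (Nat.count (fun i => x i ≤ M) m)
      = Nat.count (fun i => x i ≤ K) m := by
  induction m with
  | zero => simp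
  | succ m ih =>
    by_cases h : x m ≤ M
    · rw [Nat.count_succ (fun i => x i ≤ M), if_pos h, Nat.count_succ, ih,
        proj_of x M _ m h rfl, Nat.count_succ]
    · rw [Nat.count_succ (fun i => x i ≤ M), if_neg h, Nat.count_succ, if_neg (by omega)]
      simpa using ih

theorem proj_proj (x : ℕ → ℕ) (K M : ℕ) (hKM : K ≤ M) : proj K (proj M x) = proj K x := by
  funext j
  by_cases h : proj K (proj M x) j = 0
  · by_cases h' : proj K x j = 0
    · rw [h, h']
    · obtain ⟨n, h1, h2, h3⟩ := of_proj x K j h'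
      have e := proj_of x M _ n (h2.trans hKM) rfl
      rw [← h1, ← e]
      apply proj_of
      · omega
      · rw [count_proj x K M hKM, h3]
  · obtain ⟨n, h1, h2, h3⟩ := of_proj _ K j h
    obtain ⟨m, h4, h5, h6⟩ := of_proj x M n (by rw [h1]; exact h)
    rw [← h1, ← h4]
    symm
    apply proj_of
    · omega
    · rw [← count_proj x K M hKM, h6, h3]

theorem proj_mem (x : ℕ → ℕ) (hx : x ∈ PathSpace) (N : ℕ) : proj N x ∈ PathSpaceN N := by
  constructor
  · intro j k hjk h0
    by_contra hk
    obtain ⟨n, h1, h2, h3⟩ := of_proj x N k hk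
    rcases hjk.eq_or_lt with rfl | hlt
    · exact hk h0
    obtain ⟨m, hm, hpm, hcm⟩ := exists_count (p := fun i => x i ≤ N) j n (by omega)
    rw [proj_of x N j m hpm hcm] at h0
    have := hx m n hm.le h0
    omega
  · intro j
    by_cases h : proj N x j = 0
    · omega
    · obtain ⟨n, h1, h2, h3⟩ := of_proj x N j h
      omega

theorem proj_self (x : ℕ → ℕ) (N : ℕ) (hx : ∀ i, x i ≤ N) : proj N x = x := by
  funext j
  apply proj_of x N j j (hx j)
  rw [Nat.count_iff_forall]
  exact fun _ _ => hx _

theorem virt_proj (x : ℕ+ → ℕ → ℕ) (hx : x ∈ VirtualPathSpace) (M : ℕ+) :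
    ∀ K : ℕ+, K ≤ M → proj K (x M) = x K := by
  induction M using PNat.recOn with
  | one =>
    intro K hK
    obtain rfl : K = 1 := le_antisymm hK (one_le)
    exact proj_self _ _ (hx.1 1).2
  | succ M ih =>
    intro K hK
    rcases hK.eq_or_lt with rfl | hlt
    · exact proj_self _ _ (hx.1 _).2
    · have hKM : K ≤ M := PNat.lt_add_one_iff.mp hlt
      rw [← proj_proj _ K M (by exact_mod_cast hKM), hx.2 M, ih K hKM]

/-- The image ι(𝒞) is contained and dense in the virtual path space 𝓒 (density of a
subset of 𝓒 in the subspace topology is expressed by 𝓒 being contained in its closure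
in the ambient product space). -/
theorem iota_image_dense :
    (fun (x : ℕ → ℕ) (N : ℕ+) => proj N x) '' PathSpace ⊆ VirtualPathSpace ∧
    VirtualPathSpace ⊆ closure ((fun (x : ℕ → ℕ) (N : ℕ+) => proj N x) '' PathSpace) := by
  constructor
  · rintro _ ⟨x, hx, rfl⟩
    exact ⟨fun N => proj_mem x hx N, fun N => proj_proj x _ _ (by simp)⟩
  · intro x hx
    refine mem_closure_of_tendsto (b := Filter.atTop)
      (f := fun M : ℕ+ => fun N : ℕ+ => proj N (x M)) ?_
      (Filter.Eventually.of_forall fun M => ⟨x M, (hx.1 M).1, rfl⟩)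
    rw [tendsto_pi_nhds]
    intro N
    apply tendsto_const_nhds.congr'
    filter_upwards [Filter.eventually_ge_atTop N] with M hM
    exact (virt_proj x hx M N hM).symm
end

section
/- A virtual path x = (x_N)_{N∈ℕ} ∈ 𝓒 lies in ι(𝒞) if and only if the limit x = lim_{N→∞} x_N exists in 𝒞 and x = ι(x). -/
theorem hitIdx_eq_self (y : ℕ → ℕ) (N : ℕ) (j : ℕ) (h : ∀ i ≤ j, y i ≤ N) :
    hitIdx y N j = (j : ℕ∞) := by
  induction j with
  | zero =>
    rw [hitIdx]
    apply le_antisymm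
    · exact sInf_le ⟨0, rfl, h 0 le_rfl⟩
    · simp
  | succ k ih =>
    have ih' := ih (fun i hi => h i (by omega))
    rw [hitIdx, ih']
    apply le_antisymm
    · exact sInf_le ⟨k + 1, rfl, by exact_mod_cast Nat.lt_succ_self k, h _ le_rfl⟩
    · apply le_sInf
      rintro e ⟨i, rfl, hi, -⟩
      have hi' : k < i := by exact_mod_cast hi
      exact_mod_cast hi'

/-- A virtual path x = (x_N)_{N∈ℕ} ∈ 𝓒 lies in ι(𝒞) if and only if the limit
y = lim_{N→∞} x_N exists in 𝒞 and x = ι(y). -/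
theorem mem_iota_image_iff_tendsto (x : ℕ+ → ℕ → ℕ) (hx : x ∈ VirtualPathSpace) :
    (∃ y ∈ PathSpace, x = fun N : ℕ+ => proj N y) ↔
    (∃ y, y ∈ PathSpace ∧ Filter.Tendsto x Filter.atTop (nhds y) ∧
      x = fun N : ℕ+ => proj N y) := by
  constructor
  · rintro ⟨y, hy, rfl⟩
    refine ⟨y, hy, ?_, rfl⟩
    rw [tendsto_pi_nhds]
    intro j
    apply tendsto_const_nhds.congr'
    filter_upwards [Filter.eventually_ge_atTop
      (⟨(∑ i ∈ Finset.range (j + 1), y i) + 1, Nat.succ_pos _⟩ : ℕ+)] with N hN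
    have hN' : (∑ i ∈ Finset.range (j + 1), y i) + 1 ≤ (N : ℕ) := hN
    have key : hitIdx y N j = (j : ℕ∞) := by
      apply hitIdx_eq_self
      intro i hi
      have := Finset.single_le_sum (f := y) (s := Finset.range (j + 1)) (fun _ _ => Nat.zero_le _)
        (Finset.mem_range.2 (Nat.lt_succ_of_le hi))
      omega
    simp [proj, key]
  · rintro ⟨y, hy, -, h⟩
    exact ⟨y, hy, h⟩
end

section
/- The map sending each Markovian probability measure λ ∈ 𝓓₀ to its sequence of one-dimensional marginal distributions (λ ∘ y_N^{-1})_{N∈ℕ} is a homeomorphism from 𝓓₀ onto 𝓓₁. -/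
open MeasureTheory

/-- The space 𝓘 of virtual initial states: sequences (y_N)_{N∈ℕ} with y_N ∈ {0,...,N} and,
for each N, either y_{N+1} = y_N or y_{N+1} = N+1.  It carries the (subspace of the)
product topology and the corresponding Borel σ-algebra. -/
def VIS : Set (ℕ+ → ℕ) :=
  {y | (∀ N : ℕ+, y N ≤ (N : ℕ)) ∧ ∀ N : ℕ+, y (N + 1) = y N ∨ y (N + 1) = (N : ℕ) + 1}

/-- A Borel probability measure λ on 𝓘 is Markovian if, whenever the conditioning events
have positive probability, λ(y_{N+1} = a_{N+1} | y_1 = a_1, ..., y_N = a_N)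
= λ(y_{N+1} = a_{N+1} | y_N = a_N). -/
def Markovian (lam : ProbabilityMeasure ↥VIS) : Prop :=
  ∀ (N : ℕ+) (a : ℕ+ → ℕ), (∀ M : ℕ+, M ≤ N + 1 → a M ≤ (M : ℕ)) →
    (lam : Measure ↥VIS) {y | ∀ M : ℕ+, M ≤ N → (y : ℕ+ → ℕ) M = a M} ≠ 0 →
    (lam : Measure ↥VIS) {y | (y : ℕ+ → ℕ) N = a N} ≠ 0 →
    (lam : Measure ↥VIS)
        {y | (∀ M : ℕ+, M ≤ N → (y : ℕ+ → ℕ) M = a M) ∧ (y : ℕ+ → ℕ) (N + 1) = a (N + 1)} /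
      (lam : Measure ↥VIS) {y | ∀ M : ℕ+, M ≤ N → (y : ℕ+ → ℕ) M = a M}
    = (lam : Measure ↥VIS) {y | (y : ℕ+ → ℕ) N = a N ∧ (y : ℕ+ → ℕ) (N + 1) = a (N + 1)} /
        (lam : Measure ↥VIS) {y | (y : ℕ+ → ℕ) N = a N}

/-- Membership in the space 𝓓₁ of virtual distributions: a sequence of probability
measures ν_N on {0,...,N} (identified with their vectors of point masses) with
ν_N(a) ≥ ν_{N+1}(a) for all a ∈ {0,...,N}. -/
def MemD1 (ν : ℕ+ → ℕ → ℝ) : Prop :=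
  (∀ (N : ℕ+) (a : ℕ), 0 ≤ ν N a) ∧
  (∀ N : ℕ+, ∑ a ∈ Finset.range ((N : ℕ) + 1), ν N a = 1) ∧
  (∀ (N : ℕ+) (a : ℕ), (N : ℕ) < a → ν N a = 0) ∧
  (∀ (N : ℕ+) (a : ℕ), a ≤ (N : ℕ) → ν (N + 1) a ≤ ν N a)

/-- The space 𝓓₀ of Markovian probability measures on 𝓘, with the topology of weak
convergence. -/
def D0 : Set (ProbabilityMeasure ↥VIS) := {lam | Markovian lam}

/-- The space 𝓓₁, with the topology of pointwise convergence. -/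
def D1 : Set (ℕ+ → ℕ → ℝ) := {ν | MemD1 ν}


namespace VISAux

open scoped NNReal ENNReal Topology

/-- coordinate event -/
def E (N : ℕ+) (b : ℕ) : Set ↥VIS := {y | (y : ℕ+ → ℕ) N = b}

/-- cylinder event -/
def cyl (N : ℕ+) (a : ℕ+ → ℕ) : Set ↥VIS := {y | ∀ M : ℕ+, M ≤ N → (y : ℕ+ → ℕ) M = a M}

/-- sets depending only on the first N coordinates -/
def Dep (N : ℕ+) (S : Set ↥VIS) : Prop :=
  ∀ y z : ↥VIS, (∀ M : ℕ+, M ≤ N → (y : ℕ+ → ℕ) M = (z : ℕ+ → ℕ) M) → (y ∈ S ↔ z ∈ S)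

/-- multiplicative Markov property at time N -/
def P (N : ℕ+) (lam : ProbabilityMeasure ↥VIS) : Prop :=
  ∀ (a : ℕ+ → ℕ) (b : ℕ),
    lam (cyl N a ∩ E (N + 1) b) * lam (E N (a N)) = lam (cyl N a) * lam (E N (a N) ∩ E (N + 1) b)

lemma le_of_vis (y : ↥VIS) (N : ℕ+) : (y : ℕ+ → ℕ) N ≤ N := y.2.1 N

lemma step_of_vis (y : ↥VIS) (N : ℕ+) :
    (y : ℕ+ → ℕ) (N + 1) = (y : ℕ+ → ℕ) N ∨ (y : ℕ+ → ℕ) (N + 1) = (N : ℕ) + 1 := y.2.2 N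

lemma isClopen_E (N : ℕ+) (b : ℕ) : IsClopen (E N b) :=
  (isClopen_discrete ({b} : Set ℕ)).preimage
    (((continuous_apply N).comp continuous_subtype_val : Continuous fun y : ↥VIS => (y : ℕ+ → ℕ) N))

lemma cyl_eq (N : ℕ+) (a : ℕ+ → ℕ) : cyl N a = ⋂ M ∈ Set.Iic N, E M (a M) := by
  ext y; simp [cyl, E]

lemma isClopen_cyl (N : ℕ+) (a : ℕ+ → ℕ) : IsClopen (cyl N a) := by
  rw [cyl_eq]
  exact (Set.finite_Iic N).isClopen_biInter fun M _ => isClopen_E M (a M)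

instance : CompactSpace ↥VIS := by
  rw [← isCompact_iff_compactSpace]
  have h1 : IsCompact (Set.pi Set.univ fun N : ℕ+ => Set.Iic (N : ℕ)) :=
    isCompact_univ_pi fun N => (Set.finite_Iic _).isCompact
  refine h1.of_isClosed_subset ?_ (fun y hy N _ => hy.1 N)
  have : VIS = (⋂ N : ℕ+, {y : ℕ+ → ℕ | y N ≤ (N : ℕ)}) ∩
      ⋂ N : ℕ+, ({y : ℕ+ → ℕ | y (N + 1) = y N} ∪ {y | y (N + 1) = (N : ℕ) + 1}) := by
    ext y; simp [VIS]
  rw [this]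
  refine (isClosed_iInter fun N => isClosed_le (by fun_prop) (by fun_prop)).inter
    (isClosed_iInter fun N => (isClosed_eq (by fun_prop) (by fun_prop)).union
      (isClosed_eq (by fun_prop) (by fun_prop)))

lemma cont_eval {S : Set ↥VIS} (hS : IsClopen S) :
    Continuous fun lam : ProbabilityMeasure ↥VIS => lam S :=
  continuous_iff_continuousAt.2 fun _ =>
    ProbabilityMeasure.tendsto_measure_of_isClopen_of_tendsto Filter.tendsto_id hS

lemma meas_E (N : ℕ+) (b : ℕ) : MeasurableSet (E N b) := (isClopen_E N b).isOpen.measurableSet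
lemma meas_cyl (N : ℕ+) (a : ℕ+ → ℕ) : MeasurableSet (cyl N a) := (isClopen_cyl N a).isOpen.measurableSet

lemma isClosed_P (N : ℕ+) : IsClosed {lam | P N lam} := by
  have : {lam | P N lam} = ⋂ (a : ℕ+ → ℕ), ⋂ (b : ℕ), {lam : ProbabilityMeasure ↥VIS |
    lam (cyl N a ∩ E (N + 1) b) * lam (E N (a N)) =
      lam (cyl N a) * lam (E N (a N) ∩ E (N + 1) b)} := by
    ext; simp [P]
  rw [this]
  refine isClosed_iInter fun a => isClosed_iInter fun b => isClosed_eq ?_ ?_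
  · exact (cont_eval ((isClopen_cyl N a).inter (isClopen_E _ _))).mul (cont_eval (isClopen_E _ _))
  · exact (cont_eval (isClopen_cyl N a)).mul (cont_eval ((isClopen_E _ _).inter (isClopen_E _ _)))

lemma cyl_sub (N : ℕ+) (a : ℕ+ → ℕ) : cyl N a ⊆ E N (a N) := fun _ hy => hy N le_rfl

lemma markov_iff (lam : ProbabilityMeasure ↥VIS) : Markovian lam ↔ ∀ N, P N lam := by
  constructor
  · intro h N a b
    by_cases h0 : lam (cyl N a) = 0
    · have h1 : lam (cyl N a ∩ E (N + 1) b) = 0 :=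
        le_antisymm ((lam.apply_mono Set.inter_subset_left).trans h0.le) zero_le
      rw [h0, h1]; simp
    have h0' : lam (E N (a N)) ≠ 0 := fun h' =>
      h0 (le_antisymm ((lam.apply_mono (cyl_sub N a)).trans h'.le) zero_le)
    have hne : ∃ y, y ∈ cyl N a := by
      by_contra hh
      push Not at hh
      exact h0 (by rw [Set.eq_empty_of_forall_notMem hh]; simp)
    obtain ⟨y, hy⟩ := hne
    by_cases hb : b ≤ (N : ℕ) + 1
    · let a' : ℕ+ → ℕ := fun M => if M ≤ N then a M else b
      have haN : a' N = a N := by simp [a']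
      have haN1 : a' (N + 1) = b := by
        have : ¬ (N + 1 ≤ N) := by simp
        simp [a']
      have hc : cyl N a' = cyl N a := by
        ext z
        refine forall_congr' fun M => forall_congr' fun hM => ?_
        simp [a', hM]
      have key := h N a' (by
        intro M hM
        by_cases hMN : M ≤ N
        · simp only [a', hMN, if_true]
          rw [← hy M hMN]; exact le_of_vis y M
        · have : M = N + 1 := le_antisymm hM (PNat.add_one_le_iff.2 (not_le.1 hMN))
          rw [this, haN1]; simpa using hb)
      change (lam : Measure ↥VIS) (cyl N a') ≠ 0 → (lam : Measure ↥VIS) (E N (a' N)) ≠ 0 →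
        (lam : Measure ↥VIS) (cyl N a' ∩ E (N + 1) (a' (N + 1))) / (lam : Measure ↥VIS) (cyl N a') =
        (lam : Measure ↥VIS) (E N (a' N) ∩ E (N + 1) (a' (N + 1))) /
          (lam : Measure ↥VIS) (E N (a' N)) at key
      rw [hc, haN, haN1] at key
      simp only [← ProbabilityMeasure.ennreal_coeFn_eq_coeFn_toMeasure] at key
      have key := key (by simpa using h0) (by simpa using h0')
      rw [← ENNReal.coe_div h0, ← ENNReal.coe_div h0', ENNReal.coe_inj, div_eq_div_iff h0 h0'] at key
      rw [key, mul_comm]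
    · have : E (N + 1) b = ∅ := by
        refine Set.eq_empty_of_forall_notMem fun z hz => hb ?_
        rw [← (show (z : ℕ+ → ℕ) (N + 1) = b from hz)]
        simpa using le_of_vis z (N + 1)
      simp [this]
  · intro h N a _ h0 h0'
    change (lam : Measure ↥VIS) (cyl N a ∩ E (N + 1) (a (N + 1))) / (lam : Measure ↥VIS) (cyl N a) =
        (lam : Measure ↥VIS) (E N (a N) ∩ E (N + 1) (a (N + 1))) /
          (lam : Measure ↥VIS) (E N (a N))
    change (lam : Measure ↥VIS) (cyl N a) ≠ 0 at h0
    change (lam : Measure ↥VIS) (E N (a N)) ≠ 0 at h0'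
    simp only [← ProbabilityMeasure.ennreal_coeFn_eq_coeFn_toMeasure] at h0 h0' ⊢
    have h1 : lam (cyl N a) ≠ 0 := by simpa using h0
    have h1' : lam (E N (a N)) ≠ 0 := by simpa using h0'
    rw [← ENNReal.coe_div h1, ← ENNReal.coe_div h1', ENNReal.coe_inj, div_eq_div_iff h1 h1',
      h N a (a (N + 1)), mul_comm]

lemma D0_eq : D0 = ⋂ N, {lam | P N lam} := by
  ext lam; simp [D0, markov_iff]

instance : CompactSpace ↥D0 := by
  rw [← isCompact_iff_compactSpace, D0_eq]
  exact (isClosed_iInter isClosed_P).isCompact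

lemma sum_E (lam : ProbabilityMeasure ↥VIS) (N : ℕ+) :
    ∑ b ∈ Finset.range ((N : ℕ) + 1), lam (E N b) = 1 := by
  rw [← ENNReal.coe_inj]
  push_cast
  simp only [ProbabilityMeasure.ennreal_coeFn_eq_coeFn_toMeasure]
  rw [← measure_biUnion_finset]
  · have : (⋃ b ∈ Finset.range ((N : ℕ) + 1), E N b) = Set.univ := by
      ext y
      simp only [Set.mem_iUnion, Set.mem_univ, iff_true]
      exact ⟨(y : ℕ+ → ℕ) N, Finset.mem_range.2 (Nat.lt_succ_of_le (le_of_vis y N)), rfl⟩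
    rw [this]; simp
  · intro b _ c _ hbc
    refine Set.disjoint_left.2 fun y hy hy' => hbc ?_
    exact (show (y : ℕ+ → ℕ) N = b from hy).symm.trans hy'
  · exact fun b _ => meas_E N b

lemma E_empty {N : ℕ+} {b : ℕ} (h : (N : ℕ) < b) : E N b = ∅ :=
  Set.eq_empty_of_forall_notMem fun z hz => by
    have h1 : (z : ℕ+ → ℕ) N = b := hz
    have := le_of_vis z N
    omega

lemma E_anti {N : ℕ+} {b : ℕ} (h : b ≤ (N : ℕ)) : E (N + 1) b ⊆ E N b := fun z hz => by
  have h1 : (z : ℕ+ → ℕ) (N + 1) = b := hz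
  change (z : ℕ+ → ℕ) N = b
  rcases step_of_vis z N with h2 | h2 <;> omega

lemma mem_D1 (lam : ProbabilityMeasure ↥VIS) : (fun N b => (lam (E N b) : ℝ)) ∈ D1 := by
  refine ⟨fun N a => by positivity, fun N => ?_, fun N a h => ?_, fun N a h => ?_⟩
  · have h1 := sum_E lam N
    rw [← NNReal.coe_inj] at h1
    push_cast at h1
    exact h1
  · simp [E_empty h]
  · exact_mod_cast lam.apply_mono (E_anti h)

lemma dep_E {M N : ℕ+} (h : M ≤ N) (b : ℕ) : Dep N (E M b) := fun y z hyz => by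
  simp [E, hyz M h]

lemma dep_cyl {M N : ℕ+} (h : M ≤ N) (a : ℕ+ → ℕ) : Dep N (cyl M a) := fun y z hyz => by
  refine forall_congr' fun K => forall_congr' fun hK => ?_
  rw [hyz K (hK.trans h)]

lemma Dep.inter {N : ℕ+} {S T : Set ↥VIS} (hS : Dep N S) (hT : Dep N T) : Dep N (S ∩ T) :=
  fun y z h => and_congr (hS y z h) (hT y z h)

lemma Dep.mono {M N : ℕ+} (h : M ≤ N) {S : Set ↥VIS} (hS : Dep M S) : Dep N S :=
  fun y z hyz => hS y z fun K hK => hyz K (hK.trans h)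

lemma cyl_succ (N : ℕ+) (a : ℕ+ → ℕ) : cyl (N + 1) a = cyl N a ∩ E (N + 1) (a (N + 1)) := by
  ext y
  constructor
  · intro h
    exact ⟨fun M hM => h M (hM.trans (by
      exact (PNat.lt_add_right N 1).le)), h _ le_rfl⟩
  · rintro ⟨h1, h2⟩ M hM
    by_cases hMN : M ≤ N
    · exact h1 M hMN
    · have : M = N + 1 := le_antisymm hM (PNat.add_one_le_iff.2 (not_le.1 hMN))
      rw [this]; exact h2

lemma pair_eq {l m : ProbabilityMeasure ↥VIS} (h : ∀ N b, l (E N b) = m (E N b))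
    (N : ℕ+) (c b : ℕ) : l (E N c ∩ E (N + 1) b) = m (E N c ∩ E (N + 1) b) := by
  rcases lt_or_ge (N : ℕ) c with hc | hc
  · simp [E_empty hc]
  rcases lt_trichotomy b ((N : ℕ) + 1) with hb | hb | hb
  · have hb' : b ≤ N := by omega
    by_cases hbc : b = c
    · subst hbc
      rw [Set.inter_eq_right.2 (E_anti hb'), h]
    · have : E N c ∩ E (N + 1) b = ∅ := by
        refine Set.eq_empty_of_forall_notMem fun z hz => hbc ?_
        have h1 : (z : ℕ+ → ℕ) N = c := hz.1
        have h2 : (z : ℕ+ → ℕ) N = b := E_anti hb' hz.2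
        omega
      simp [this]
  · have hs : ∀ k : ProbabilityMeasure ↥VIS,
        k (E N c) = k (E N c ∩ E (N + 1) b) + k (E (N + 1) c) := by
      intro k
      rw [← ENNReal.coe_inj]
      push_cast
      simp only [ProbabilityMeasure.ennreal_coeFn_eq_coeFn_toMeasure]
      rw [← measure_union _ (meas_E _ _)]
      · congr 1
        ext z
        have hstep := step_of_vis z N
        have hanti := @E_anti N c hc z
        simp only [E, Set.mem_ofPred_eq, Set.mem_union, Set.mem_inter_iff] at hanti ⊢
        omega
      · refine Set.disjoint_left.2 fun z hz hz' => ?_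
        have h1 : (z : ℕ+ → ℕ) (N + 1) = b := hz.2
        have h2 : (z : ℕ+ → ℕ) (N + 1) = c := hz'
        omega
    have h1 := hs l
    have h2 := hs m
    rw [h, h, h2] at h1
    exact (add_right_cancel h1).symm
  · have : E (N + 1) b = ∅ := E_empty (by simpa using hb)
    simp [this]

lemma cyl_det {l m : ProbabilityMeasure ↥VIS} (h : ∀ N b, l (E N b) = m (E N b))
    (hl : ∀ N, P N l) (hm : ∀ N, P N m) (a : ℕ+ → ℕ) (N : ℕ+) : l (cyl N a) = m (cyl N a) := by
  induction N using PNat.recOn with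
  | one =>
    have : cyl 1 a = E 1 (a 1) := by
      ext y; simp [cyl, E]
    rw [this, h]
  | succ N ih =>
    rw [cyl_succ]
    by_cases h0 : m (E N (a N)) = 0
    · have hz : ∀ k : ProbabilityMeasure ↥VIS, k (E N (a N)) = 0 →
          k (cyl N a ∩ E (N + 1) (a (N + 1))) = 0 := fun k hk =>
        le_antisymm ((k.apply_mono (Set.inter_subset_left.trans (cyl_sub N a))).trans hk.le) zero_le
      rw [hz l (by rw [h, h0]), hz m h0]
    · refine mul_right_cancel₀ h0 ?_
      rw [hm N a (a (N + 1)), ← ih, ← pair_eq h, ← hl N a (a (N + 1)), h]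

lemma dep_det {l m : ProbabilityMeasure ↥VIS} (h : ∀ N a, l (cyl N a) = m (cyl N a))
    {N : ℕ+} {S : Set ↥VIS} (hS : Dep N S) : (l : Measure ↥VIS) S = (m : Measure ↥VIS) S := by
  let R : ↥VIS → (Finset.Iic N → ℕ) := fun y M => (y : ℕ+ → ℕ) M
  have hR : Measurable R :=
    measurable_pi_lambda _ fun M => (measurable_pi_apply _).comp measurable_subtype_coe
  have hmap : (l : Measure ↥VIS).map R = (m : Measure ↥VIS).map R := by
    refine Measure.ext_of_singleton fun f => ?_
    rw [Measure.map_apply hR (measurableSet_singleton _),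
      Measure.map_apply hR (measurableSet_singleton _)]
    have : R ⁻¹' {f} = cyl N fun M => if hM : M ≤ N then f ⟨M, Finset.mem_Iic.2 hM⟩ else 0 := by
      ext y
      simp only [Set.mem_preimage, Set.mem_singleton_iff, cyl, Set.mem_ofPred_eq]
      constructor
      · rintro rfl M hM
        simp [hM, R]
      · intro hy
        ext ⟨M, hM⟩
        have hM' := Finset.mem_Iic.1 hM
        have := hy M hM'
        simpa [hM'] using this
    rw [this, ← ProbabilityMeasure.ennreal_coeFn_eq_coeFn_toMeasure,
      ← ProbabilityMeasure.ennreal_coeFn_eq_coeFn_toMeasure, h]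
  have hSR : S = R ⁻¹' (R '' S) := by
    refine Set.Subset.antisymm (Set.subset_preimage_image _ _) ?_
    rintro y ⟨z, hz, hzy⟩
    refine (hS z y fun M hM => ?_).1 hz
    exact congrFun hzy ⟨M, Finset.mem_Iic.2 hM⟩
  have hms : MeasurableSet (R '' S) := (Set.to_countable _).measurableSet
  rw [hSR, ← Measure.map_apply hR hms, hmap, Measure.map_apply hR hms]

lemma measure_det {l m : ProbabilityMeasure ↥VIS} (h : ∀ N a, l (cyl N a) = m (cyl N a)) :
    l = m := by
  apply ProbabilityMeasure.toMeasure_injective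
  let C : Set (Set ↥VIS) := {S | MeasurableSet S ∧ ∃ N, Dep N S}
  refine ext_of_generate_finite C ?_ ?_ ?_ (by simp)
  · apply le_antisymm
    · have : @Measurable _ _ (MeasurableSpace.generateFrom C) _ (Subtype.val : ↥VIS → ℕ+ → ℕ) := by
        refine @measurable_pi_lambda _ _ _ (MeasurableSpace.generateFrom C) _ _ fun N => ?_
        refine @measurable_to_countable' _ _ _ _ (MeasurableSpace.generateFrom C) _ fun b => ?_
        exact MeasurableSpace.measurableSet_generateFrom ⟨meas_E N b, N, dep_E le_rfl b⟩
      exact this.comap_le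
    · exact MeasurableSpace.generateFrom_le fun S hS => hS.1
  · rintro S ⟨hS, N, hN⟩ T ⟨hT, M, hM⟩ _
    exact ⟨hS.inter hT, max N M, (hN.mono (le_max_left _ _)).inter (hM.mono (le_max_right _ _))⟩
  · rintro S ⟨_, N, hN⟩
    exact dep_det h hN

/-- freeze at time N -/
def stop1 (N : ℕ+) (y : ↥VIS) : ↥VIS :=
  ⟨fun M => (y : ℕ+ → ℕ) (min M N), fun M => (le_of_vis y _).trans (by
    exact_mod_cast min_le_left M N), fun M => by
    by_cases h : M + 1 ≤ N
    · have h' : M ≤ N := (PNat.lt_add_right M 1).le.trans h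
      simpa [min_eq_left h, min_eq_left h'] using step_of_vis y M
    · have h' : N ≤ M := PNat.lt_add_one_iff.1 (not_le.1 h)
      left
      simp [min_eq_right h', min_eq_right (not_le.1 h).le]⟩

/-- jump at time N+1 and then freeze -/
def jump1 (N : ℕ+) (y : ↥VIS) : ↥VIS :=
  ⟨fun M => if M ≤ N then (y : ℕ+ → ℕ) M else N + 1, fun M => by
    dsimp only
    split_ifs with h
    · exact le_of_vis y M
    · exact_mod_cast PNat.add_one_le_iff.2 (not_le.1 h), fun M => by
    by_cases h : M + 1 ≤ N
    · have h' : M ≤ N := (PNat.lt_add_right M 1).le.trans h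
      simpa [h, h'] using step_of_vis y M
    · by_cases h' : M ≤ N
      · have : M = N := le_antisymm h' (PNat.lt_add_one_iff.1 (not_le.1 h))
        right; simp [this]
      · left; simp [h, h']⟩

lemma meas_coord (M : ℕ+) : Measurable fun y : ↥VIS => (y : ℕ+ → ℕ) M :=
  (measurable_pi_apply M).comp measurable_subtype_coe

lemma meas_stop (N : ℕ+) : Measurable (stop1 N) :=
  Measurable.subtype_mk (f := fun (y : ↥VIS) (M : ℕ+) => (y : ℕ+ → ℕ) (min M N))
    (measurable_pi_lambda _ fun M => meas_coord (min M N))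

lemma exists_pm (μ : Measure ↥VIS) (h : IsProbabilityMeasure μ) :
    ∃ m : ProbabilityMeasure ↥VIS, ∀ S, (m S : ℝ≥0∞) = μ S :=
  ⟨⟨μ, h⟩, fun S => ENNReal.coe_toNNReal (measure_ne_top μ S)⟩

lemma meas_jump (N : ℕ+) : Measurable (jump1 N) := by
  refine Measurable.subtype_mk (measurable_pi_lambda _ fun M => ?_)
  by_cases h : M ≤ N
  · simpa [h] using meas_coord M
  · simp [h]

lemma pre_stop {N : ℕ+} {S : Set ↥VIS} (hS : Dep N S) : stop1 N ⁻¹' S = S := by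
  ext y
  exact hS _ _ fun M hM => by simp [stop1, min_eq_left hM]

lemma pre_jump {N : ℕ+} {S : Set ↥VIS} (hS : Dep N S) : jump1 N ⁻¹' S = S := by
  ext y
  exact hS _ _ fun M hM => by simp [jump1, hM]

lemma ext_exists (l : ProbabilityMeasure ↥VIS) (N : ℕ+) (r : ℕ → ℝ≥0) (hr : ∀ a, r a ≤ 1) :
    ∃ m : ProbabilityMeasure ↥VIS, (∀ S, MeasurableSet S → Dep N S → m S = l S) ∧
      ∀ S c b, MeasurableSet S → Dep N S → S ⊆ E N c →
        m (S ∩ E (N + 1) b) =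
          ((if b = c then r c else 0) + (if b = (N : ℕ) + 1 then 1 - r c else 0)) * l S := by
  have hev : Measurable fun y : ↥VIS => (y : ℕ+ → ℕ) N :=
    (measurable_pi_apply _).comp measurable_subtype_coe
  let f : ↥VIS → ℝ≥0∞ := fun y => r ((y : ℕ+ → ℕ) N)
  let g : ↥VIS → ℝ≥0∞ := fun y => ((1 - r ((y : ℕ+ → ℕ) N) : ℝ≥0) : ℝ≥0∞)
  have hf : Measurable f := (measurable_from_top (f := fun n : ℕ => (r n : ℝ≥0∞))).comp hev
  have hg : Measurable g :=
    (measurable_from_top (f := fun n : ℕ => ((1 - r n : ℝ≥0) : ℝ≥0∞))).comp hev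
  let μ : Measure ↥VIS := ((l : Measure ↥VIS).withDensity f).map (stop1 N) +
    ((l : Measure ↥VIS).withDensity g).map (jump1 N)
  have hμ : ∀ S, MeasurableSet S → μ S = (∫⁻ y in stop1 N ⁻¹' S, f y ∂(l : Measure ↥VIS)) +
      ∫⁻ y in jump1 N ⁻¹' S, g y ∂(l : Measure ↥VIS) := by
    intro S hS
    rw [Measure.add_apply, Measure.map_apply (meas_stop N) hS, Measure.map_apply (meas_jump N) hS,
      withDensity_apply _ (meas_stop N hS), withDensity_apply _ (meas_jump N hS)]
  have h1 : ∀ S, MeasurableSet S → Dep N S → μ S = (l : Measure ↥VIS) S := by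
    intro S hS hd
    rw [hμ S hS, pre_stop hd, pre_jump hd, ← lintegral_add_left hf]
    have : ∀ y, f y + g y = 1 := by
      intro y
      simp only [f, g]
      rw [← ENNReal.coe_add, add_tsub_cancel_of_le (hr _)]; rfl
    simp [this]
  have hp : IsProbabilityMeasure μ := ⟨by
    rw [h1 Set.univ MeasurableSet.univ (fun _ _ _ => Iff.rfl)]; simp⟩
  obtain ⟨m, hm⟩ := exists_pm μ hp
  refine ⟨m, fun S hS hd => ?_, fun S c b hS hd hc => ?_⟩
  · rw [← ENNReal.coe_inj]
    rw [hm, h1 S hS hd, ProbabilityMeasure.ennreal_coeFn_eq_coeFn_toMeasure]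
  · rw [← ENNReal.coe_inj]
    rw [hm, ENNReal.coe_mul, ENNReal.coe_add,
      ProbabilityMeasure.ennreal_coeFn_eq_coeFn_toMeasure]
    rw [hμ _ (hS.inter (meas_E _ _)), Set.preimage_inter, Set.preimage_inter, pre_stop hd,
      pre_jump hd, add_mul]
    congr 1
    · have e : stop1 N ⁻¹' E (N + 1) b = E N b := by
        ext y
        simp [stop1, E, min_eq_right (PNat.lt_add_right N 1).le]
      rw [e]
      split_ifs with hbc
      · rw [hbc, Set.inter_eq_left.2 hc]
        rw [setLIntegral_congr_fun hS (g := fun _ => (r c : ℝ≥0∞)), setLIntegral_const]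
        intro y hy
        have : (y : ℕ+ → ℕ) N = c := hc hy
        simp [f, this]
      · have : S ∩ E N b = ∅ := by
          refine Set.eq_empty_of_forall_notMem fun z hz => hbc ?_
          exact (show (z : ℕ+ → ℕ) N = b from hz.2).symm.trans (hc hz.1)
        simp [this]
    · split_ifs with hbc
      · have e : jump1 N ⁻¹' E (N + 1) b = Set.univ := by
          ext y
          simp [jump1, E, hbc]
        rw [e, Set.inter_univ]
        rw [setLIntegral_congr_fun hS (g := fun _ => ((1 - r c : ℝ≥0) : ℝ≥0∞)), setLIntegral_const]
        intro y hy
        have : (y : ℕ+ → ℕ) N = c := hc hy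
        simp [g, this]
      · have e : jump1 N ⁻¹' E (N + 1) b = ∅ := by
          ext y
          simp [jump1, E, Ne.symm hbc]
        simp [e]

/-- approximating sets -/
def A (ν : ℕ+ → ℕ → ℝ) (N : ℕ+) : Set (ProbabilityMeasure ↥VIS) :=
  {l | (∀ M, M ≤ N → ∀ b, (l (E M b) : ℝ) = ν M b) ∧ ∀ M, M < N → P M l}

lemma isClosed_A (ν : ℕ+ → ℕ → ℝ) (N : ℕ+) : IsClosed (A ν N) := by
  have : A ν N = (⋂ M, ⋂ (_ : M ≤ N), ⋂ b, {l : ProbabilityMeasure ↥VIS |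
      (l (E M b) : ℝ) = ν M b}) ∩ ⋂ M, ⋂ (_ : M < N), {l | P M l} := by
    ext; simp [A]
  rw [this]
  refine IsClosed.inter (isClosed_iInter fun M => isClosed_iInter fun _ => isClosed_iInter fun b =>
    isClosed_eq (NNReal.continuous_coe.comp (cont_eval (isClopen_E M b))) continuous_const)
    (isClosed_iInter fun M => isClosed_iInter fun _ => isClosed_P M)

lemma base_exists (p : ℝ≥0) (hp : p ≤ 1) : ∃ l : ProbabilityMeasure ↥VIS, l (E 1 0) = p := by
  let z : ↥VIS := ⟨fun _ => 0, fun _ => Nat.zero_le _, fun _ => Or.inl rfl⟩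
  let o : ↥VIS := ⟨fun _ => 1, fun N => N.one_le, fun _ => Or.inl rfl⟩
  let μ : Measure ↥VIS := (p : ℝ≥0∞) • Measure.dirac z + ((1 - p : ℝ≥0) : ℝ≥0∞) • Measure.dirac o
  have h : IsProbabilityMeasure μ := ⟨by
    simp only [μ, Measure.add_apply, Measure.smul_apply, measure_univ, smul_eq_mul, mul_one]
    rw [← ENNReal.coe_add, add_tsub_cancel_of_le hp]; rfl⟩
  obtain ⟨m, hm⟩ := exists_pm μ h
  refine ⟨m, ?_⟩
  rw [← ENNReal.coe_inj, hm]
  simp only [μ, Measure.add_apply, Measure.smul_apply, Measure.dirac_apply' _ (meas_E 1 0)]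
  simp [E, z, o]

lemma nonempty_A {ν : ℕ+ → ℕ → ℝ} (hν : MemD1 ν) (N : ℕ+) : (A ν N).Nonempty := by
  obtain ⟨h0, hsum, hz, hanti⟩ := hν
  have last : ∀ (l : ProbabilityMeasure ↥VIS) (N : ℕ+),
      (∀ b, b < (N : ℕ) → (l (E N b) : ℝ) = ν N b) → ∀ b, (l (E N b) : ℝ) = ν N b := by
    intro l N h b
    rcases lt_trichotomy b N with hb | hb | hb
    · exact h b hb
    · have h1 := sum_E l N
      rw [← NNReal.coe_inj] at h1
      push_cast at h1
      have h2 := hsum N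
      rw [Finset.sum_range_succ] at h1 h2
      rw [Finset.sum_congr rfl fun b hb => h b (Finset.mem_range.1 hb)] at h1
      rw [hb]; linarith
    · rw [hz N b hb, E_empty hb]; simp
  induction N using PNat.recOn with
  | one =>
    have h1 : ν 1 0 ≤ 1 := by
      have := hsum 1
      have h2 := h0 1 1
      simp [Finset.sum_range_succ] at this
      linarith
    obtain ⟨l, hl⟩ := base_exists (ν 1 0).toNNReal (by simpa using h1)
    refine ⟨l, fun M hM => ?_, fun M hM => absurd hM (by simp)⟩
    have : M = 1 := le_antisymm hM (PNat.one_le _)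
    subst this
    refine last l 1 fun b hb => ?_
    have : b = 0 := by simpa using hb
    rw [this, hl, Real.coe_toNNReal _ (h0 _ _)]
  | succ N ih =>
    obtain ⟨l, hl1, hl2⟩ := ih
    obtain ⟨m, hm1, hm2⟩ := ext_exists l N
      (fun a => min 1 (ν (N + 1) a / ν N a).toNNReal) (fun a => min_le_left _ _)
    have hmP : ∀ M, M < N → P M m := by
      intro M hM a b
      have hM1 : M + 1 ≤ N := PNat.add_one_le_iff.2 hM
      rw [hm1 _ ((meas_cyl _ _).inter (meas_E _ _)) ((dep_cyl hM.le _).inter (dep_E hM1 _)),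
        hm1 _ ((meas_E _ _).inter (meas_E _ _)) ((dep_E hM.le _).inter (dep_E hM1 _)),
        hm1 _ (meas_cyl _ _) (dep_cyl hM.le _), hm1 _ (meas_E _ _) (dep_E hM.le _)]
      exact hl2 M hM a b
    refine ⟨m, fun M hM => ?_, fun M hM => ?_⟩
    · by_cases hMN : M ≤ N
      · intro b
        rw [hm1 _ (meas_E _ _) (dep_E hMN _), hl1 M hMN]
      · have : M = N + 1 := le_antisymm hM (PNat.add_one_le_iff.2 (not_le.1 hMN))
        subst this
        refine last m _ fun b hb => ?_
        have hb : b ≤ N := by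
          rw [PNat.add_coe, PNat.one_coe] at hb; omega
        have hbn : b ≠ (N : ℕ) + 1 := by omega
        have := hm2 (E N b) b b (meas_E _ _) (dep_E le_rfl _) subset_rfl
        rw [Set.inter_eq_right.2 (E_anti hb), if_pos rfl, if_neg hbn, add_zero] at this
        rw [this]
        push_cast
        rw [hl1 N le_rfl, Real.coe_toNNReal _ (div_nonneg (h0 _ _) (h0 _ _)),
          min_eq_right (div_le_one_of_le₀ (hanti N b hb) (h0 _ _))]
        by_cases hv : ν N b = 0
        · have h1 := hanti N b hb
          have h2 := h0 (N + 1) b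
          rw [hv] at h1 ⊢
          linarith
        · exact div_mul_cancel₀ _ hv
    · rcases (PNat.lt_add_one_iff.1 hM).lt_or_eq with hM | rfl
      · exact hmP M hM
      · intro a b
        rw [hm2 _ (a M) b (meas_cyl _ _) (dep_cyl le_rfl _) (cyl_sub M a),
          hm2 _ (a M) b (meas_E _ _) (dep_E le_rfl _) subset_rfl,
          hm1 _ (meas_cyl _ _) (dep_cyl le_rfl _), hm1 _ (meas_E _ _) (dep_E le_rfl _)]
        ring

lemma surj {ν : ℕ+ → ℕ → ℝ} (hν : MemD1 ν) :
    ∃ l : ProbabilityMeasure ↥VIS, (∀ N, P N l) ∧ ∀ N b, (l (E N b) : ℝ) = ν N b := by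
  have hne : (⋂ N, A ν N).Nonempty := by
    refine IsCompact.nonempty_iInter_of_directed_nonempty_isCompact_isClosed _ ?_
      (nonempty_A hν) (fun N => (isClosed_A ν N).isCompact) (isClosed_A ν)
    have hanti : Antitone (A ν) := fun M N h l hl =>
      ⟨fun K hK => hl.1 K (hK.trans h), fun K hK => hl.2 K (hK.trans_le h)⟩
    exact hanti.directed_ge
  obtain ⟨l, hl⟩ := hne
  rw [Set.mem_iInter] at hl
  exact ⟨l, fun N => (hl (N + 1)).2 N (PNat.lt_add_right N 1), fun N => (hl N).1 N le_rfl⟩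

/-- the marginal map -/
def Phi (lam : ↥D0) : ↥D1 := ⟨fun N b => ((lam : ProbabilityMeasure ↥VIS) (E N b) : ℝ), mem_D1 _⟩

lemma bij_Phi : Function.Bijective Phi := by
  constructor
  · intro l m h
    apply Subtype.ext
    have h' : ∀ N b, (l : ProbabilityMeasure ↥VIS) (E N b) = (m : ProbabilityMeasure ↥VIS) (E N b) :=
      fun N b => NNReal.coe_injective (congrFun (congrFun (congrArg Subtype.val h) N) b)
    exact measure_det fun N a =>
      cyl_det h' ((markov_iff _).1 l.2) ((markov_iff _).1 m.2) a N
  · rintro ⟨ν, hν⟩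
    obtain ⟨l, h1, h2⟩ := surj hν
    exact ⟨⟨l, (markov_iff _).2 h1⟩, Subtype.ext (funext fun N => funext fun b => h2 N b)⟩

lemma cont_Phi : Continuous Phi :=
  Continuous.subtype_mk (continuous_pi fun N => continuous_pi fun b =>
    NNReal.continuous_coe.comp ((cont_eval (isClopen_E N b)).comp continuous_subtype_val)) _

end VISAux

/-- The map sending each Markovian probability measure λ ∈ 𝓓₀ to its sequence of
one-dimensional marginal distributions (λ(y_N = ·))_{N∈ℕ} is a homeomorphism from 𝓓₀
onto 𝓓₁. -/
theorem d0_homeomorph_d1 :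
    ∃ h : ↥D0 ≃ₜ ↥D1,
      ∀ (lam : ↥D0) (N : ℕ+) (b : ℕ),
        ((h lam : ℕ+ → ℕ → ℝ) N b)
          = (((lam : ProbabilityMeasure ↥VIS) : Measure ↥VIS)
              {y | (y : ℕ+ → ℕ) N = b}).toReal := by
  exact ⟨Continuous.homeoOfEquivCompactToT2 (f := Equiv.ofBijective VISAux.Phi VISAux.bij_Phi)
    VISAux.cont_Phi, fun _ _ _ => rfl⟩
end

section
/- For every compatible pair (ν, K) ∈ 𝓓₁ × 𝓚 there exists a probability space carrying a virtual Markov chain X = (X_N)_{N∈ℕ} such that, for every N ∈ ℕ, X_N is a Markov chain with initial distribution ν_N and transition matrix K_N. -/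
open MeasureTheory

/-- `X` is a Markov chain (on ℕ₀) under `P` with initial distribution `ν` and transition
matrix `K`. -/
def IsMarkovChain {Ω : Type*} [MeasurableSpace Ω] (P : Measure Ω)
    (X : ℕ → Ω → ℕ) (ν : ℕ → ℝ) (K : ℕ → ℕ → ℝ) : Prop :=
  (∀ i, Measurable (X i)) ∧
  ∀ (l : ℕ) (a : ℕ → ℕ),
    P {ω | ∀ i ≤ l, X i ω = a i}
      = ENNReal.ofReal (ν (a 0) * ∏ k ∈ Finset.Icc 1 l, K (a (k - 1)) (a k))

/-- `K` is a row-stochastic matrix on ℕ₀. -/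
def IsStochastic (K : ℕ → ℕ → ℝ) : Prop :=
  (∀ a b, 0 ≤ K a b) ∧ ∀ a, HasSum (K a) 1

/-- Membership in 𝒦_N: row-stochastic with `K a a = 1` for all `a ∉ {1,...,N}`. -/
def MemKN (N : ℕ) (K : ℕ → ℕ → ℝ) : Prop :=
  IsStochastic K ∧ ∀ a : ℕ, ¬(1 ≤ a ∧ a ≤ N) → K a a = 1

/-- `ν` is a probability vector on ℕ₀. -/
def IsProbVec (ν : ℕ → ℝ) : Prop := (∀ a, 0 ≤ ν a) ∧ HasSum ν 1

/-- `X` is a virtual Markov chain under `P`. -/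
def IsVMC {Ω : Type*} [MeasurableSpace Ω] (P : Measure Ω) (X : Ω → ℕ+ → ℕ → ℕ) : Prop :=
  (∀ᵐ ω ∂P, X ω ∈ VirtualPathSpace) ∧
  ∀ N : ℕ+, ∃ (ν : ℕ → ℝ) (K : ℕ → ℕ → ℝ),
    IsProbVec ν ∧ (∀ a : ℕ, (N : ℕ) < a → ν a = 0) ∧ MemKN N K ∧
    IsMarkovChain P (fun i ω => X ω N i) ν K

/-- The projection P_N : 𝒦_{N+1} → 𝒦_N on transition matrices. -/
noncomputable def projK (N : ℕ) (K : ℕ → ℕ → ℝ) : ℕ → ℕ → ℝ := fun a b =>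
  if 1 ≤ a ∧ a ≤ N then
    (if b ≤ N then
      (if K (N + 1) (N + 1) < 1 then
        K a b + K a (N + 1) * K (N + 1) b / (1 - K (N + 1) (N + 1))
      else if b = 0 then K a 0 + K a (N + 1)
      else K a b)
    else 0)
  else if a = b then 1 else 0

/-- Membership in the space 𝓚 of virtual transition matrices. -/
def MemVTM (K : ℕ+ → ℕ → ℕ → ℝ) : Prop :=
  (∀ N : ℕ+, MemKN N (K N)) ∧ ∀ N : ℕ+, projK N (K (N + 1)) = K N

/-- The constants C^K_{N,a} (with `C^K_{0,0} = 0` by convention). -/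
noncomputable def Ccoef (K : ℕ+ → ℕ → ℕ → ℝ) (N a : ℕ) : ℝ :=
  if N = 0 then 0
  else if K N.succPNat (N + 1) (N + 1) < 1 then
    K N.succPNat (N + 1) a / (1 - K N.succPNat (N + 1) (N + 1))
  else if a = 0 then 1 else 0

/-- Compatibility of a virtual distribution with a virtual transition matrix:
ν_N(a) = ν_{N+1}(a) + ν_{N+1}(N+1)·C^K_{N,a}. -/
def Compatible (ν : ℕ+ → ℕ → ℝ) (K : ℕ+ → ℕ → ℕ → ℝ) : Prop :=
  ∀ (N : ℕ+) (a : ℕ), a ≤ (N : ℕ) →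
    ν N a = ν (N + 1) a + ν (N + 1) ((N : ℕ) + 1) * Ccoef K (N : ℕ) a

open ProbabilityTheory

namespace VMC

def sh (x : ℕ → ℕ) : ℕ → ℕ := fun i => x (i + 1)

lemma sInf_shift (p : ℕ → Prop) (h0 : ¬ p 0) :
    sInf {e : ℕ∞ | ∃ i : ℕ, e = (i : ℕ∞) ∧ p i}
      = sInf {e : ℕ∞ | ∃ i : ℕ, e = (i : ℕ∞) ∧ p (i + 1)} + 1 := by
  apply le_antisymm
  · rcases Set.eq_empty_or_nonempty {e : ℕ∞ | ∃ i : ℕ, e = (i : ℕ∞) ∧ p (i + 1)} with h | h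
    · rw [h]; simp
    · obtain ⟨i, hi, hp⟩ := csInf_mem h
      rw [hi]
      exact sInf_le ⟨i + 1, by push_cast; rfl, hp⟩
  · apply le_sInf
    rintro e ⟨i, rfl, hp⟩
    obtain _ | k := i
    · exact absurd hp h0
    · push_cast
      gcongr
      exact sInf_le ⟨k, rfl, hp⟩

lemma hitIdx_le_zero {x : ℕ → ℕ} {N : ℕ} (h : x 0 ≤ N) : hitIdx x N 0 = 0 := by
  rw [hitIdx]
  have : (0 : ℕ∞) ∈ {e : ℕ∞ | ∃ i : ℕ, e = (i : ℕ∞) ∧ x i ≤ N} := ⟨0, by simp, h⟩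
  exact le_antisymm (sInf_le this) bot_le

lemma coe_succ_lt (h : ℕ∞) (i : ℕ) : h + 1 < ((i + 1 : ℕ) : ℕ∞) ↔ h < (i : ℕ∞) := by
  push_cast
  exact ENat.add_lt_add_iff_right (by simp)

lemma hitIdx_le_succ {x : ℕ → ℕ} {N : ℕ} (h : x 0 ≤ N) (j : ℕ) :
    hitIdx x N (j + 1) = hitIdx (sh x) N j + 1 := by
  induction j with
  | zero =>
    have h1 : hitIdx x N (0 + 1) = sInf {e : ℕ∞ | ∃ i : ℕ, e = (i : ℕ∞) ∧
        hitIdx x N 0 < (i : ℕ∞) ∧ x i ≤ N} := hitIdx.eq_2 x N 0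
    rw [h1, hitIdx_le_zero h, hitIdx,
      sInf_shift (fun i => 0 < (i : ℕ∞) ∧ x i ≤ N) (by simp)]
    simp [sh]
  | succ j ih =>
    rw [hitIdx, ih, sInf_shift (fun i => hitIdx (sh x) N j + 1 < (i : ℕ∞) ∧ x i ≤ N) (by simp)]
    simp only [coe_succ_lt]
    rw [hitIdx]; rfl

lemma hitIdx_gt {x : ℕ → ℕ} {N : ℕ} (h : N < x 0) (j : ℕ) :
    hitIdx x N j = hitIdx (sh x) N j + 1 := by
  induction j with
  | zero =>
    rw [hitIdx, hitIdx, sInf_shift (fun i => x i ≤ N) (by simpa using h)]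
    rfl
  | succ j ih =>
    rw [hitIdx, ih, sInf_shift (fun i => hitIdx (sh x) N j + 1 < (i : ℕ∞) ∧ x i ≤ N) (by simp)]
    simp only [coe_succ_lt]
    rw [hitIdx]; rfl

lemma proj_aux {x : ℕ → ℕ} {N j k : ℕ} (h : hitIdx x N j = hitIdx (sh x) N k + 1) :
    proj N x j = proj N (sh x) k := by
  rw [proj, proj, h]
  by_cases ht : hitIdx (sh x) N k = ⊤
  · simp [ht]
  · obtain ⟨m, hm⟩ := ENat.ne_top_iff_exists.mp ht
    rw [← hm]
    have h1 : ((m : ℕ∞) + 1) = ((m + 1 : ℕ) : ℕ∞) := by push_cast; rfl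
    rw [h1]
    simp only [ENat.natCast_ne_top, if_false, ENat.toNat_natCast]
    rfl

lemma proj_zero {x : ℕ → ℕ} {N : ℕ} (h : x 0 ≤ N) : proj N x 0 = x 0 := by
  simp [proj, hitIdx_le_zero h]

lemma proj_succ {x : ℕ → ℕ} {N : ℕ} (h : x 0 ≤ N) (j : ℕ) :
    proj N x (j + 1) = proj N (sh x) j := proj_aux (hitIdx_le_succ h j)

lemma proj_gt {x : ℕ → ℕ} {N : ℕ} (h : N < x 0) : proj N x = proj N (sh x) :=
  funext fun j => proj_aux (hitIdx_gt h j)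

lemma proj_never {x : ℕ → ℕ} {N : ℕ} (h : ∀ i, N < x i) (j : ℕ) : proj N x j = 0 := by
  have : hitIdx x N j = ⊤ := by
    cases j <;> rw [hitIdx] <;> simp [fun i => not_le.mpr (h i)]
  simp [proj, this]

lemma proj_const_zero {x : ℕ → ℕ} {N : ℕ} (h : ∀ i, x i = 0) (j : ℕ) : proj N x j = 0 := by
  rw [proj]; split_ifs <;> simp [h]

lemma meas_hit (N j i : ℕ) : MeasurableSet {x : ℕ → ℕ | hitIdx x N j < (i : ℕ∞)} := by
  induction j generalizing i with
  | zero =>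
    have : {x : ℕ → ℕ | hitIdx x N 0 < (i : ℕ∞)} = ⋃ k : ℕ, {x | k < i ∧ x k ≤ N} := by
      ext x
      simp only [hitIdx, sInf_lt_iff, Set.mem_ofPred_eq, Set.mem_iUnion]
      constructor
      · rintro ⟨e, ⟨k, rfl, hk⟩, h⟩; exact ⟨k, by exact_mod_cast h, hk⟩
      · rintro ⟨k, h, hk⟩; exact ⟨k, ⟨k, rfl, hk⟩, by exact_mod_cast h⟩
    rw [this]
    refine MeasurableSet.iUnion fun k => (MeasurableSet.const _).inter ?_
    exact measurableSet_le (measurable_pi_apply k) measurable_const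
  | succ j ih =>
    have : {x : ℕ → ℕ | hitIdx x N (j + 1) < (i : ℕ∞)}
        = ⋃ k : ℕ, {x | k < i ∧ hitIdx x N j < (k : ℕ∞) ∧ x k ≤ N} := by
      ext x
      simp only [hitIdx, sInf_lt_iff, Set.mem_ofPred_eq, Set.mem_iUnion]
      constructor
      · rintro ⟨e, ⟨k, rfl, hk⟩, h⟩; exact ⟨k, by exact_mod_cast h, hk⟩
      · rintro ⟨k, h, hk⟩; exact ⟨k, ⟨k, rfl, hk⟩, by exact_mod_cast h⟩
    rw [this]
    refine MeasurableSet.iUnion fun k => (MeasurableSet.const _).inter ((ih k).inter ?_)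
    exact measurableSet_le (measurable_pi_apply k) measurable_const

lemma measurable_proj (N : ℕ) : Measurable (proj N) := by
  refine measurable_pi_iff.mpr fun j => measurable_to_countable' fun c => ?_
  have : (fun x => proj N x j) ⁻¹' {c} =
      ({x | ∀ i : ℕ, ¬ hitIdx x N j < (i : ℕ∞)} ∩ {_x | c = 0}) ∪
      ⋃ i : ℕ, ({x | ¬ hitIdx x N j < (i : ℕ∞)} ∩ {x | hitIdx x N j < ((i + 1 : ℕ) : ℕ∞)}
        ∩ {x | x i = c}) := by
    ext x
    simp only [Set.mem_preimage, Set.mem_singleton_iff, Set.mem_union, Set.mem_inter_iff,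
      Set.mem_ofPred_eq, Set.mem_iUnion, proj]
    by_cases ht : hitIdx x N j = ⊤
    · simp [ht, eq_comm]
    · obtain ⟨m, hm⟩ := ENat.ne_top_iff_exists.mp ht
      rw [← hm]
      simp only [ENat.natCast_ne_top, if_false, ENat.toNat_natCast, Nat.cast_lt]
      constructor
      · rintro rfl; exact Or.inr ⟨m, by simp⟩
      · rintro (⟨h, -⟩ | ⟨i, ⟨h1, h2⟩, h3⟩)
        · exact absurd (h (m + 1)) (by simp)
        · have : i = m := by omega
          rw [← this, h3]
  rw [this]
  refine MeasurableSet.union (MeasurableSet.inter ?_ (MeasurableSet.const _))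
    (MeasurableSet.iUnion fun i => ((meas_hit N j i).compl.inter (meas_hit N j (i + 1))).inter ?_)
  · simp only [Set.ofPred_forall]
    exact MeasurableSet.iInter fun i => (meas_hit N j i).compl
  · exact measurableSet_eq_fun (measurable_pi_apply i) measurable_const

/-- cylinder -/
def cyl (l : ℕ) (a : ℕ → ℕ) : Set (ℕ → ℕ) := {x | ∀ i ≤ l, x i = a i}

lemma meas_cyl (l : ℕ) (a : ℕ → ℕ) : MeasurableSet (cyl l a) := by
  simp only [cyl, Set.ofPred_forall]
  exact MeasurableSet.iInter fun i => MeasurableSet.iInter fun _ =>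
    measurable_pi_apply i (measurableSet_singleton _)

lemma ext_cyl {μ ν : Measure (ℕ → ℕ)} [IsFiniteMeasure μ]
    (h : ∀ l a, μ (cyl (l + 1) a) = ν (cyl (l + 1) a)) : μ = ν := by
  let P : (I : Finset ℕ) → Measure ((i : I) → ℕ) := fun I => μ.map I.restrict
  have hμ : IsProjectiveLimit (α := fun _ : ℕ => ℕ) μ P := fun I => rfl
  have hν : IsProjectiveLimit (α := fun _ : ℕ => ℕ) ν P := by
    have hP : IsProjectiveMeasureFamily (α := fun _ : ℕ => ℕ) P := by
      intro I J hJI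
      simp only [P]
      rw [Measure.map_map (by fun_prop) (by fun_prop)]
      rfl
    refine (isProjectiveLimit_nat_iff' hP ν 1).2 fun n hn => ?_
    obtain ⟨l, rfl⟩ : ∃ l, n = l + 1 := ⟨n - 1, by omega⟩
    refine Measure.ext_of_singleton fun a => ?_
    let a' : ℕ → ℕ := fun i => if hi : i ∈ Finset.Iic (l + 1) then a ⟨i, hi⟩ else 0
    have key : ((Finset.Iic (l + 1)).restrict : (ℕ → ℕ) → _) ⁻¹' {a} = cyl (l + 1) a' := by
      ext x
      simp only [Set.mem_preimage, Set.mem_singleton_iff, cyl, Set.mem_ofPred_eq, funext_iff,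
        Finset.restrict]
      constructor
      · intro hx i hi
        have hi' : i ∈ Finset.Iic (l + 1) := Finset.mem_Iic.2 hi
        simp only [a', hi', dif_pos]
        exact hx ⟨i, hi'⟩
      · rintro hx ⟨i, hi⟩
        have := hx i (Finset.mem_Iic.1 hi)
        simpa only [a', hi, dif_pos] using this
    simp only [P]
    rw [Measure.map_apply (by fun_prop) (measurableSet_singleton _),
      Measure.map_apply (by fun_prop) (measurableSet_singleton _)]
    have h2 : (Preorder.frestrictLe (π := fun _ : ℕ => ℕ) (l + 1)) ⁻¹' {a} = cyl (l + 1) a' := key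
    rw [h2, key, h]
  have : ∀ I, IsFiniteMeasure (P I) := fun I => by simp only [P]; infer_instance
  exact hμ.unique hν

noncomputable def row (K : ℕ → ℕ → ℝ) (hK : IsStochastic K) (b : ℕ) : PMF ℕ :=
  ⟨fun c => ENNReal.ofReal (K b c), by
    have h := hK.2 b
    have h2 := ENNReal.summable (f := fun c => ENNReal.ofReal (K b c)) |>.hasSum
    rwa [← ENNReal.ofReal_tsum_of_nonneg (hK.1 b) h.summable, h.tsum_eq, ENNReal.ofReal_one] at h2⟩

lemma row_singleton (K : ℕ → ℕ → ℝ) (hK : IsStochastic K) (b c : ℕ) :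
    (row K hK b).toMeasure {c} = ENNReal.ofReal (K b c) := by
  rw [PMF.toMeasure_apply_singleton _ _ (measurableSet_singleton c)]; rfl

def flow (b : ℕ) (ω : ℕ × ℕ → ℕ) : ℕ → ℕ
  | 0 => b
  | n + 1 => ω (n, flow b ω n)

lemma measurable_flow (b : ℕ) : Measurable (flow b) := by
  refine measurable_pi_iff.mpr fun n => ?_
  induction n with
  | zero => exact measurable_const
  | succ n ih =>
    refine measurable_to_countable' fun c => ?_
    have : (fun ω => flow b ω (n + 1)) ⁻¹' {c}
        = ⋃ d : ℕ, ({ω | flow b ω n = d} ∩ {ω | ω (n, d) = c}) := by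
      ext ω
      simp [flow]
    rw [this]
    exact MeasurableSet.iUnion fun d => (measurableSet_eq_fun ih measurable_const).inter
      (measurableSet_eq_fun (measurable_pi_apply _) measurable_const)

noncomputable def base (K : ℕ → ℕ → ℝ) (hK : IsStochastic K) : Measure (ℕ × ℕ → ℕ) :=
  Measure.infinitePi fun p => (row K hK p.2).toMeasure

instance (K : ℕ → ℕ → ℝ) (hK : IsStochastic K) : IsProbabilityMeasure (base K hK) := by
  unfold base; infer_instance

noncomputable def chainM (K : ℕ → ℕ → ℝ) (hK : IsStochastic K) (b : ℕ) : Measure (ℕ → ℕ) :=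
  (base K hK).map (flow b)

instance (K : ℕ → ℕ → ℝ) (hK : IsStochastic K) (b : ℕ) : IsProbabilityMeasure (chainM K hK b) :=
  Measure.isProbabilityMeasure_map (measurable_flow b).aemeasurable

lemma chain_cyl (K : ℕ → ℕ → ℝ) (hK : IsStochastic K) (b l : ℕ) (a : ℕ → ℕ) :
    chainM K hK b (cyl l a) =
      if b = a 0 then ENNReal.ofReal (∏ k ∈ Finset.range l, K (a k) (a (k + 1))) else 0 := by
  rw [chainM, Measure.map_apply (measurable_flow b) (meas_cyl l a)]
  split_ifs with hb
  · let s : Finset (ℕ × ℕ) := (Finset.range l).image fun k => (k, a k)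
    have : flow b ⁻¹' cyl l a = Set.pi (s : Set (ℕ × ℕ)) fun p => {a (p.1 + 1)} := by
      ext ω
      simp only [Set.mem_preimage, cyl, Set.mem_ofPred_eq, Set.mem_pi, s, Finset.coe_image,
        Set.mem_image, Finset.coe_range, Set.mem_Iio, Set.mem_singleton_iff]
      constructor
      · rintro h _ ⟨k, hk, rfl⟩
        have h1 := h k (by omega)
        have h2 := h (k + 1) (by omega)
        rw [flow, h1] at h2
        exact h2
      · intro h i
        induction i with
        | zero => intro _; exact hb
        | succ i ih =>
          intro hi
          rw [flow, ih (by omega)]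
          exact h _ ⟨i, by omega, rfl⟩
    rw [this, base, Measure.infinitePi_pi _ (fun _ _ => measurableSet_singleton _),
      Finset.prod_image (by intro x _ y _ h; exact (Prod.mk.inj h).1),
      ENNReal.ofReal_prod_of_nonneg (fun _ _ => hK.1 _ _)]
    exact Finset.prod_congr rfl fun k _ => row_singleton K hK _ _
  · have : flow b ⁻¹' cyl l a = ∅ := by
      ext ω
      simp only [Set.mem_preimage, cyl, Set.mem_ofPred_eq, Set.mem_empty_iff_false, iff_false]
      intro h
      exact hb (h 0 (by omega))
    rw [this, measure_empty]

lemma chain_ae (K : ℕ → ℕ → ℝ) (hK : IsStochastic K) (b : ℕ) :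
    ∀ᵐ x ∂(chainM K hK b), x 0 = b ∧ ∀ n, K (x n) (x (n + 1)) ≠ 0 := by
  have h : ∀ᵐ ω ∂(base K hK), ∀ p : ℕ × ℕ, K p.2 (ω p) ≠ 0 := by
    rw [ae_all_iff]
    intro p
    have h1 : ∀ᵐ c ∂((row K hK p.2).toMeasure), K p.2 c ≠ 0 := by
      rw [ae_iff, measure_null_iff_singleton (Set.to_countable _)]
      intro c hc
      rw [row_singleton]
      simp only [ne_eq, not_not, Set.mem_ofPred_eq] at hc
      simp [hc]
    exact (measurePreserving_eval_infinitePi (fun p : ℕ × ℕ => (row K hK p.2).toMeasure)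
      p).quasiMeasurePreserving.ae h1
  have hm : MeasurableSet {x : ℕ → ℕ | x 0 = b ∧ ∀ n, K (x n) (x (n + 1)) ≠ 0} := by
    have he : {x : ℕ → ℕ | x 0 = b ∧ ∀ n, K (x n) (x (n + 1)) ≠ 0}
        = {x | x 0 = b} ∩ ⋂ n : ℕ, {x | K (x n) (x (n + 1)) ≠ 0} := by
      ext x; simp
    rw [he]
    refine (measurableSet_eq_fun (measurable_pi_apply _) measurable_const).inter ?_
    refine MeasurableSet.iInter fun n => ?_
    have : Measurable fun x : ℕ → ℕ => (x n, x (n + 1)) := by fun_prop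
    exact this (MeasurableSet.of_discrete (s := {p : ℕ × ℕ | K p.1 p.2 ≠ 0}))
  rw [chainM, ae_map_iff (measurable_flow b).aemeasurable hm]
  filter_upwards [h] with ω hω
  exact ⟨rfl, fun n => hω (n, flow b ω n)⟩

def cons (b : ℕ) (x : ℕ → ℕ) : ℕ → ℕ
  | 0 => b
  | n + 1 => x n

lemma measurable_cons (b : ℕ) : Measurable (cons b) := by
  refine measurable_pi_iff.mpr fun n => ?_
  cases n with
  | zero => exact measurable_const
  | succ n => exact measurable_pi_apply n

lemma first_step (K : ℕ → ℕ → ℝ) (hK : IsStochastic K) (M b : ℕ)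
    (hb : ∀ c, M < c → K b c = 0) :
    chainM K hK b = ∑ c ∈ Finset.range (M + 1),
      ENNReal.ofReal (K b c) • (chainM K hK c).map (cons b) := by
  refine ext_cyl fun l a => ?_
  rw [Measure.finsetSum_apply]
  simp only [Measure.smul_apply, smul_eq_mul]
  simp only [Measure.map_apply (measurable_cons b) (meas_cyl _ _)]
  rw [chain_cyl]
  split_ifs with h
  · have : cons b ⁻¹' cyl (l + 1) a = cyl l (sh a) := by
      ext x
      simp only [Set.mem_preimage, cyl, Set.mem_ofPred_eq]
      constructor
      · intro hx i hi; exact hx (i + 1) (by omega)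
      · intro hx i hi
        cases i with
        | zero => exact h
        | succ i => exact hx i (by omega)
    simp only [this, chain_cyl]
    simp only [mul_ite, mul_zero, Finset.sum_ite_eq']
    rw [Finset.prod_range_succ', ← h, mul_comm, ENNReal.ofReal_mul (hK.1 _ _)]
    split_ifs with h1
    · rfl
    · have : K b (a (0 + 1)) = 0 := hb _ (by simpa [sh] using h1)
      rw [this]; simp
  · have : cons b ⁻¹' cyl (l + 1) a = ∅ := by
      ext x
      simp only [Set.mem_preimage, cyl, Set.mem_ofPred_eq, Set.mem_empty_iff_false, iff_false]
      intro hx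
      exact h (hx 0 (by omega))
    simp [this]

lemma first_step_real (K : ℕ → ℕ → ℝ) (hK : IsStochastic K) (M b : ℕ)
    (hb : ∀ c, M < c → K b c = 0) {A : Set (ℕ → ℕ)} (hA : MeasurableSet A) :
    (chainM K hK b).real A = ∑ c ∈ Finset.range (M + 1),
      K b c * (chainM K hK c).real (cons b ⁻¹' A) := by
  rw [Measure.real, first_step K hK M b hb, Measure.finsetSum_apply]
  simp only [Measure.smul_apply, smul_eq_mul]
  rw [ENNReal.toReal_sum]
  · refine Finset.sum_congr rfl fun c _ => ?_
    rw [ENNReal.toReal_mul, ENNReal.toReal_ofReal (hK.1 _ _),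
      Measure.map_apply (measurable_cons b) hA]
    rfl
  · intro c _
    have : IsProbabilityMeasure ((chainM K hK c).map (cons b)) :=
      Measure.isProbabilityMeasure_map (measurable_cons b).aemeasurable
    exact ENNReal.mul_ne_top (by simp) (by simp)

lemma real_of_ae {μ : Measure (ℕ → ℕ)} [IsProbabilityMeasure μ] {A : Set (ℕ → ℕ)} {Z : Prop}
    [Decidable Z] (h : ∀ᵐ x ∂μ, x ∈ A ↔ Z) : μ.real A = if Z then 1 else 0 := by
  split_ifs with hZ
  · have : A =ᵐ[μ] (Set.univ : Set (ℕ → ℕ)) := by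
      rw [Filter.eventuallyEq_set]
      filter_upwards [h] with x hx
      simp [hx, hZ]
    rw [measureReal_congr this]; simp
  · have : A =ᵐ[μ] (∅ : Set (ℕ → ℕ)) := by
      rw [Filter.eventuallyEq_set]
      filter_upwards [h] with x hx
      simp [hx, hZ]
    rw [measureReal_congr this]; simp

lemma stoch_zero {K : ℕ → ℕ → ℝ} (hK : IsStochastic K) {a c : ℕ} (h : K a a = 1) (hc : c ≠ a) :
    K a c = 0 := by
  have h1 := sum_le_hasSum {a, c} (fun i _ => hK.1 a i) (hK.2 a)
  rw [Finset.sum_pair hc.symm, h] at h1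
  linarith [hK.1 a c]

lemma stoch_le_one {K : ℕ → ℕ → ℝ} (hK : IsStochastic K) (a c : ℕ) : K a c ≤ 1 := by
  have h1 := sum_le_hasSum {c} (fun i _ => hK.1 a i) (hK.2 a)
  simpa using h1

lemma chain_absorb {K : ℕ → ℕ → ℝ} (hK : IsStochastic K) {b : ℕ} (h : K b b = 1) :
    ∀ᵐ x ∂(chainM K hK b), ∀ i, x i = b := by
  filter_upwards [chain_ae K hK b] with x hx i
  induction i with
  | zero => exact hx.1
  | succ i ih =>
    by_contra hne
    apply hx.2 i
    rw [ih]
    exact stoch_zero hK h hne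

def pc (N l : ℕ) (a : ℕ → ℕ) : Set (ℕ → ℕ) := proj N ⁻¹' cyl l a

lemma meas_pc (N l : ℕ) (a : ℕ → ℕ) : MeasurableSet (pc N l a) :=
  measurable_proj N (meas_cyl l a)

lemma mem_pc {N l : ℕ} {a x : ℕ → ℕ} : x ∈ pc N l a ↔ ∀ i ≤ l, proj N x i = a i := Iff.rfl

lemma sh_cons (b : ℕ) (x : ℕ → ℕ) : sh (cons b x) = x := rfl

section core
variable {N : ℕ} {K κ : ℕ → ℕ → ℝ} {C : ℕ → ℝ}

lemma core_s (hK : IsStochastic K) (h0 : K 0 0 = 1)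
    (hs : ∀ b ≤ N + 1, ∀ c, N + 1 < c → K b c = 0)
    (hC1 : K (N + 1) (N + 1) < 1 → ∀ c, C c = K (N + 1) c / (1 - K (N + 1) (N + 1)))
    (hC2 : ¬ K (N + 1) (N + 1) < 1 → ∀ c, C c = if c = 0 then 1 else 0)
    (l : ℕ) (a : ℕ → ℕ) :
    (chainM K hK (N + 1)).real (pc N l a)
      = ∑ c ∈ Finset.range (N + 1), C c * (chainM K hK c).real (pc N l a) := by
  classical
  by_cases h : K (N + 1) (N + 1) < 1
  · have h1 := first_step_real K hK (N + 1) (N + 1) (hs _ le_rfl) (meas_pc N l a)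
    have h2 : cons (N + 1) ⁻¹' pc N l a = pc N l a := by
      ext x
      rw [Set.mem_preimage, mem_pc, mem_pc, proj_gt (x := cons (N + 1) x) (Nat.lt_succ_self N),
        sh_cons]
    rw [h2, Finset.sum_range_succ] at h1
    simp only [hC1 h, div_mul_eq_mul_div]
    rw [← Finset.sum_div, eq_div_iff (by linarith)]
    linarith
  · have h1 : K (N + 1) (N + 1) = 1 := le_antisymm (stoch_le_one hK _ _) (not_lt.1 h)
    simp only [hC2 h, ite_mul, one_mul, zero_mul, Finset.sum_ite_eq', Finset.mem_range,
      Nat.succ_pos, if_true]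
    rw [real_of_ae (Z := ∀ i ≤ l, 0 = a i), real_of_ae (Z := ∀ i ≤ l, 0 = a i)]
    · filter_upwards [chain_absorb hK h0] with x hx
      simp only [mem_pc, proj_const_zero hx]
    · filter_upwards [chain_absorb hK h1] with x hx
      have : ∀ i, N < x i := fun i => by rw [hx i]; exact Nat.lt_succ_self N
      simp only [mem_pc, proj_never this]

lemma core_b (hK : IsStochastic K) (h0 : K 0 0 = 1)
    (hs : ∀ b ≤ N + 1, ∀ c, N + 1 < c → K b c = 0)
    (hC1 : K (N + 1) (N + 1) < 1 → ∀ c, C c = K (N + 1) c / (1 - K (N + 1) (N + 1)))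
    (hC2 : ¬ K (N + 1) (N + 1) < 1 → ∀ c, C c = if c = 0 then 1 else 0)
    (hκ : ∀ b ≤ N, ∀ c ≤ N, κ b c = K b c + K b (N + 1) * C c)
    (hκ0 : ∀ b ≤ N, ∀ c, N < c → κ b c = 0)
    (l : ℕ) (a : ℕ → ℕ) (b : ℕ) (hb : b ≤ N) :
    (chainM K hK b).real (pc N l a)
      = if b = a 0 then ∏ k ∈ Finset.range l, κ (a k) (a (k + 1)) else 0 := by
  induction l generalizing a b with
  | zero =>
    rw [real_of_ae (Z := b = a 0)]
    · simp
    · filter_upwards [chain_ae K hK b] with x hx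
      rw [mem_pc]
      simp [proj_zero (x := x) (N := N) (by rw [hx.1]; exact hb), hx.1]
  | succ l ih =>
    rw [first_step_real K hK (N + 1) b (hs b (by omega)) (meas_pc N _ a)]
    split_ifs with h
    · have h2 : cons b ⁻¹' pc N (l + 1) a = pc N l (sh a) := by
        ext x
        rw [Set.mem_preimage, mem_pc, mem_pc]
        have hx : cons b x 0 ≤ N := hb
        constructor
        · intro hh i hi
          have := hh (i + 1) (by omega)
          rwa [proj_succ hx] at this
        · intro hh i hi
          cases i with
          | zero => rw [proj_zero hx]; exact h
          | succ i => rw [proj_succ hx]; exact hh i (by omega)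
      simp only [h2]
      rw [Finset.sum_range_succ, core_s hK h0 hs hC1 hC2, Finset.mul_sum,
        ← Finset.sum_add_distrib]
      have h3 : ∀ c ∈ Finset.range (N + 1), K b c * (chainM K hK c).real (pc N l (sh a))
          + K b (N + 1) * (C c * (chainM K hK c).real (pc N l (sh a)))
          = if c = sh a 0 then κ b c * ∏ k ∈ Finset.range l, κ (sh a k) (sh a (k + 1)) else 0 := by
        intro c hc
        have hc' : c ≤ N := by simpa [Nat.lt_succ_iff] using hc
        rw [ih (sh a) c hc', hκ b hb c hc']
        split_ifs <;> ring
      rw [Finset.sum_congr rfl h3, Finset.sum_ite_eq', Finset.prod_range_succ', ← h]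
      split_ifs with h4
      · rw [mul_comm]; rfl
      · have : κ b (a (0 + 1)) = 0 := hκ0 b hb _ (by simpa [sh] using h4)
        rw [this, mul_zero]
    · have h2 : cons b ⁻¹' pc N (l + 1) a = ∅ := by
        ext x
        rw [Set.mem_preimage, mem_pc]
        simp only [Set.mem_empty_iff_false, iff_false]
        intro hh
        have := hh 0 (by omega)
        rw [proj_zero (x := cons b x) hb] at this
        exact h this
      simp [h2]

end core

noncomputable def mixM (M : ℕ) (ν : ℕ → ℝ) (K : ℕ → ℕ → ℝ) (hK : IsStochastic K) :
    Measure (ℕ → ℕ) := ∑ b ∈ Finset.range (M + 1), ENNReal.ofReal (ν b) • chainM K hK b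

lemma mix_prob (M : ℕ) (ν : ℕ → ℝ) (K : ℕ → ℕ → ℝ) (hK : IsStochastic K)
    (h0 : ∀ a, 0 ≤ ν a) (h1 : ∑ b ∈ Finset.range (M + 1), ν b = 1) :
    IsProbabilityMeasure (mixM M ν K hK) := by
  constructor
  rw [mixM, Measure.finsetSum_apply]
  simp only [Measure.smul_apply, smul_eq_mul, measure_univ, mul_one]
  rw [← ENNReal.ofReal_sum_of_nonneg (fun _ _ => h0 _), h1, ENNReal.ofReal_one]

lemma mix_apply (M : ℕ) (ν : ℕ → ℝ) (K : ℕ → ℕ → ℝ) (hK : IsStochastic K)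
    (h0 : ∀ a, 0 ≤ ν a) (A : Set (ℕ → ℕ)) :
    mixM M ν K hK A
      = ENNReal.ofReal (∑ b ∈ Finset.range (M + 1), ν b * (chainM K hK b).real A) := by
  rw [mixM, Measure.finsetSum_apply,
    ENNReal.ofReal_sum_of_nonneg (fun _ _ => mul_nonneg (h0 _) measureReal_nonneg)]
  refine Finset.sum_congr rfl fun b _ => ?_
  rw [ENNReal.ofReal_mul (h0 _), Measure.smul_apply, smul_eq_mul, ofReal_measureReal]

lemma mix_cyl (M : ℕ) (ν : ℕ → ℝ) (K : ℕ → ℕ → ℝ) (hK : IsStochastic K)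
    (h0 : ∀ a, 0 ≤ ν a) (h2 : ∀ a, M < a → ν a = 0) (l : ℕ) (a : ℕ → ℕ) :
    mixM M ν K hK (cyl l a)
      = ENNReal.ofReal (ν (a 0) * ∏ k ∈ Finset.range l, K (a k) (a (k + 1))) := by
  rw [mix_apply _ _ _ _ h0]
  congr 1
  have : ∀ b, (chainM K hK b).real (cyl l a)
      = if b = a 0 then ∏ k ∈ Finset.range l, K (a k) (a (k + 1)) else 0 := by
    intro b
    rw [Measure.real, chain_cyl]
    split_ifs
    · exact ENNReal.toReal_ofReal (Finset.prod_nonneg fun _ _ => hK.1 _ _)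
    · rfl
  simp only [this, mul_ite, mul_zero, Finset.sum_ite_eq']
  split_ifs with h
  · rfl
  · rw [h2 _ (by simpa using h), zero_mul]

lemma mix_ae (M : ℕ) (ν : ℕ → ℝ) (K : ℕ → ℕ → ℝ) (hK : IsStochastic K) (p : (ℕ → ℕ) → Prop)
    (h : ∀ b ≤ M, ∀ᵐ x ∂(chainM K hK b), p x) : ∀ᵐ x ∂(mixM M ν K hK), p x := by
  rw [ae_iff, mixM, Measure.finsetSum_apply]
  refine Finset.sum_eq_zero fun b hb => ?_
  rw [Measure.smul_apply, ae_iff.1 (h b (by simpa [Nat.lt_succ_iff] using hb)), smul_zero]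

lemma mix_pathSpace (M : ℕ) (ν : ℕ → ℝ) (K : ℕ → ℕ → ℝ) (hK : IsStochastic K) (h0 : K 0 0 = 1)
    (hs : ∀ b ≤ M, ∀ c, M < c → K b c = 0) :
    ∀ᵐ x ∂(mixM M ν K hK), x ∈ PathSpaceN M := by
  refine mix_ae M ν K hK _ fun b hb => ?_
  filter_upwards [chain_ae K hK b] with x hx
  constructor
  · intro i j hij hi
    induction j, hij using Nat.le_induction with
    | base => exact hi
    | succ j _ ih =>
      by_contra hne
      apply hx.2 j
      rw [ih]
      exact stoch_zero hK h0 hne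
  · intro i
    induction i with
    | zero => rw [hx.1]; exact hb
    | succ i ih =>
      by_contra hne
      exact hx.2 i (hs _ ih _ (not_le.1 hne))

lemma mix_proj {N : ℕ} {ν ν' : ℕ → ℝ} {K κ : ℕ → ℕ → ℝ} {C : ℕ → ℝ}
    (hK : IsStochastic K) (hκs : IsStochastic κ) (h0 : K 0 0 = 1)
    (hs : ∀ b ≤ N + 1, ∀ c, N + 1 < c → K b c = 0)
    (hC1 : K (N + 1) (N + 1) < 1 → ∀ c, C c = K (N + 1) c / (1 - K (N + 1) (N + 1)))
    (hC2 : ¬ K (N + 1) (N + 1) < 1 → ∀ c, C c = if c = 0 then 1 else 0)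
    (hκ : ∀ b ≤ N, ∀ c ≤ N, κ b c = K b c + K b (N + 1) * C c)
    (hκ0 : ∀ b ≤ N, ∀ c, N < c → κ b c = 0)
    (hν0 : ∀ a, 0 ≤ ν a) (hν0' : ∀ a, 0 ≤ ν' a)
    (hν1' : ∑ b ∈ Finset.range (N + 1), ν' b = 1) (h2' : ∀ a, N < a → ν' a = 0)
    (hc : ∀ a ≤ N, ν' a = ν a + ν (N + 1) * C a) :
    (mixM (N + 1) ν K hK).map (proj N) = mixM N ν' κ hκs := by
  have := mix_prob N ν' κ hκs hν0' hν1'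
  symm
  refine ext_cyl fun l a => ?_
  rw [mix_cyl _ _ _ _ hν0' h2', Measure.map_apply (measurable_proj N) (meas_cyl _ _),
    mix_apply _ _ _ _ hν0]
  congr 1
  change _ = ∑ b ∈ Finset.range (N + 1 + 1), ν b * (chainM K hK b).real (pc N (l + 1) a)
  rw [Finset.sum_range_succ, core_s hK h0 hs hC1 hC2, Finset.mul_sum, ← Finset.sum_add_distrib]
  have h3 : ∀ c ∈ Finset.range (N + 1), ν c * (chainM K hK c).real (pc N (l + 1) a)
      + ν (N + 1) * (C c * (chainM K hK c).real (pc N (l + 1) a))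
      = if c = a 0 then ν' c * ∏ k ∈ Finset.range (l + 1), κ (a k) (a (k + 1)) else 0 := by
    intro c hc1
    have hc' : c ≤ N := by simpa [Nat.lt_succ_iff] using hc1
    rw [core_b hK h0 hs hC1 hC2 hκ hκ0 _ a c hc', hc c hc']
    split_ifs <;> ring
  rw [Finset.sum_congr rfl h3, Finset.sum_ite_eq']
  split_ifs with h
  · rfl
  · rw [h2' _ (by simpa using h), zero_mul]

lemma compProd_comap_map {α β γ : Type*} [MeasurableSpace α] [MeasurableSpace β]
    [MeasurableSpace γ] (ρ : Measure α) [IsFiniteMeasure ρ] (η : Kernel β γ) [IsMarkovKernel η]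
    (g : α → β) (hg : Measurable g) :
    (ρ ⊗ₘ η.comap g hg).map (Prod.map g id) = ρ.map g ⊗ₘ η := by
  have := Measure.isFiniteMeasure_map ρ g
  ext s hs
  rw [Measure.map_apply (by fun_prop) hs,
    Measure.compProd_apply ((hg.prodMap measurable_id) hs), Measure.compProd_apply hs,
    lintegral_map (Kernel.measurable_kernel_prodMk_left hs) hg]
  rfl

lemma glue (μ : ℕ → Measure (ℕ → ℕ)) [∀ n, IsProbabilityMeasure (μ n)]
    (f : ℕ → (ℕ → ℕ) → (ℕ → ℕ)) (hf : ∀ n, Measurable (f n))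
    (h : ∀ n, (μ (n + 1)).map (f n) = μ n) :
    ∃ P : Measure (ℕ → ℕ → ℕ), IsProbabilityMeasure P ∧
      (∀ n, P.map (fun ω => ω n) = μ n) ∧ ∀ᵐ ω ∂P, ∀ n, f n (ω (n + 1)) = ω n := by
  let g : (n : ℕ) → ((i : Finset.Iic n) → (ℕ → ℕ)) → (ℕ → ℕ) :=
    fun n x => x ⟨n, Finset.mem_Iic.2 le_rfl⟩
  have hg : ∀ n, Measurable (g n) := fun n => measurable_pi_apply _
  let η : ℕ → Kernel (ℕ → ℕ) (ℕ → ℕ) := fun n => condDistrib id (f n) (μ (n + 1))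
  let κ : (n : ℕ) → Kernel ((i : Finset.Iic n) → (ℕ → ℕ)) (ℕ → ℕ) :=
    fun n => (η n).comap (g n) (hg n)
  have hη : ∀ n, IsMarkovKernel (η n) := fun n => by simp only [η]; infer_instance
  have hκ : ∀ n, IsMarkovKernel (κ n) := fun n => by simp only [κ]; infer_instance
  let P : Measure (ℕ → ℕ → ℕ) := Kernel.trajMeasure (X := fun _ => ℕ → ℕ) (μ 0) κ
  have hP : IsProbabilityMeasure P := by simp only [P]; infer_instance
  have hpair : ∀ n, P.map (fun ω => ω n) = μ n →
      P.map (fun ω => (ω n, ω (n + 1))) = (μ (n + 1)).map (fun x => (f n x, x)) := by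
    intro n hn
    have h1 : P.map (Preorder.frestrictLe (π := fun _ : ℕ => ℕ → ℕ) n) ⊗ₘ κ n =
        P.map (fun x => (Preorder.frestrictLe (π := fun _ : ℕ => ℕ → ℕ) n x, x (n + 1))) :=
      Kernel.map_frestrictLe_trajMeasure_compProd_eq_map_trajMeasure
    have h2 := congrArg (fun m => Measure.map (Prod.map (g n) id) m) h1
    simp only [κ] at h2
    have : IsFiniteMeasure (P.map (Preorder.frestrictLe (π := fun _ : ℕ => ℕ → ℕ) n)) :=
      Measure.isFiniteMeasure_map _ _
    rw [compProd_comap_map, Measure.map_map (hg n) (by fun_prop),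
      Measure.map_map ((hg n).prodMap measurable_id) (by fun_prop)] at h2
    have h3 : P.map (g n ∘ Preorder.frestrictLe (π := fun _ : ℕ => ℕ → ℕ) n) = μ n := hn
    rw [h3] at h2
    have h4 := compProd_map_condDistrib (mβ := MeasurableSpace.pi) (μ := μ (n + 1)) (X := f n) (Y := id)
      measurable_id.aemeasurable
    rw [h n] at h4
    exact h2.symm.trans h4
  have h0 : P.map (fun ω => ω 0) = μ 0 := by
    have h1 : P.map (Preorder.frestrictLe (π := fun _ : ℕ => ℕ → ℕ) 0)
        = (μ 0).map (MeasurableEquiv.piUnique (fun _ : Finset.Iic 0 => ℕ → ℕ)).symm := by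
      simp only [P, Kernel.trajMeasure]
      rw [Measure.map_comp _ _ (by fun_prop), Kernel.traj_map_frestrictLe,
        Kernel.partialTraj_self]
      exact Measure.id_comp
    have h2 : P.map (fun ω => ω 0)
        = (P.map (Preorder.frestrictLe (π := fun _ : ℕ => ℕ → ℕ) 0)).map (g 0) := by
      rw [Measure.map_map (hg 0) (by fun_prop)]; rfl
    rw [h2, h1, Measure.map_map (hg 0) (MeasurableEquiv.measurable _)]
    exact Measure.map_id
  have hlaw : ∀ n, P.map (fun ω => ω n) = μ n := by
    intro n
    induction n with
    | zero => exact h0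
    | succ n ih =>
      have h1 := congrArg (fun m => Measure.map Prod.snd m) (hpair n ih)
      have := hf n
      rw [Measure.map_map measurable_snd (by fun_prop),
        Measure.map_map measurable_snd (by fun_prop)] at h1
      have h2 : (μ (n + 1)).map (Prod.snd ∘ fun x => (f n x, x)) = μ (n + 1) := Measure.map_id
      rw [h2] at h1
      exact h1
  refine ⟨P, hP, hlaw, ae_all_iff.2 fun n => ?_⟩
  have hm : MeasurableSet {p : (ℕ → ℕ) × (ℕ → ℕ) | f n p.2 = p.1} :=
    measurableSet_eq_fun ((hf n).comp measurable_snd) measurable_fst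
  have hae : ∀ᵐ p ∂(P.map (fun ω => (ω n, ω (n + 1)))), f n p.2 = p.1 := by
    have := hf n
    rw [hpair n (hlaw n), ae_map_iff (by fun_prop) hm]
    exact ae_of_all _ fun x => rfl
  exact (ae_map_iff (by fun_prop) hm).1 hae

end VMC

/-- For every compatible pair (ν, K) ∈ 𝓓₁ × 𝓚 there exists a probability space carrying
a virtual Markov chain whose level-N coordinate is a Markov chain with initial
distribution ν_N and transition matrix K_N. -/
theorem vmc_exists_of_compatible (ν : ℕ+ → ℕ → ℝ) (K : ℕ+ → ℕ → ℕ → ℝ)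
    (hν : MemD1 ν) (hK : MemVTM K) (hc : Compatible ν K) :
    ∃ (Ω : Type) (_ : MeasurableSpace Ω) (P : Measure Ω) (X : Ω → ℕ+ → ℕ → ℕ),
      IsProbabilityMeasure P ∧ IsVMC P X ∧
      ∀ N : ℕ+, IsMarkovChain P (fun i ω => X ω N i) (ν N) (K N) := by
  have hst : ∀ N : ℕ+, IsStochastic (K N) := fun N => (hK.1 N).1
  have h00 : ∀ N : ℕ+, K N 0 0 = 1 := fun N => (hK.1 N).2 0 (by omega)
  have hsupp : ∀ N : ℕ+, ∀ b ≤ (N : ℕ), ∀ c, (N : ℕ) < c → K N b c = 0 := by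
    intro N b hb c hc'
    by_cases hb0 : b = 0
    · subst hb0
      exact VMC.stoch_zero (hst N) (h00 N) (by omega)
    · rw [← hK.2 N]
      simp only [projK]
      rw [if_pos ⟨by omega, hb⟩, if_neg (by omega)]
  let μ : ℕ → Measure (ℕ → ℕ) := fun n =>
    VMC.mixM (n + 1) (ν n.succPNat) (K n.succPNat) (hst _)
  have hμ : ∀ n, IsProbabilityMeasure (μ n) := fun n =>
    VMC.mix_prob _ _ _ _ (hν.1 _) (hν.2.1 n.succPNat)
  have hproj : ∀ n, (μ (n + 1)).map (proj (n + 1)) = μ n := by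
    intro n
    have hadd : n.succPNat + 1 = (n + 1).succPNat := rfl
    have hKp := hK.2 n.succPNat
    rw [hadd] at hKp
    have hC1 : K (n + 1).succPNat (n + 1 + 1) (n + 1 + 1) < 1 → ∀ c, Ccoef K (n + 1) c
        = K (n + 1).succPNat (n + 1 + 1) c / (1 - K (n + 1).succPNat (n + 1 + 1) (n + 1 + 1)) := by
      intro h c
      rw [Ccoef, if_neg (by omega), if_pos h]
    have hC2 : ¬ K (n + 1).succPNat (n + 1 + 1) (n + 1 + 1) < 1 → ∀ c, Ccoef K (n + 1) c
        = if c = 0 then 1 else 0 := by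
      intro h c
      rw [Ccoef, if_neg (by omega), if_neg h]
    refine VMC.mix_proj (C := Ccoef K (n + 1)) (hst _) (hst _) (h00 _)
      (hsupp (n + 1).succPNat) hC1 hC2 ?_ (hsupp n.succPNat) (hν.1 _) (hν.1 _)
      (hν.2.1 n.succPNat) (hν.2.2.1 n.succPNat) (hc n.succPNat)
    intro b hb c hcN
    by_cases hb0 : b = 0
    · subst hb0
      rw [VMC.stoch_zero (hst _) (h00 (n + 1).succPNat) (show n + 1 + 1 ≠ 0 by omega), zero_mul,
        add_zero]
      by_cases hc0 : c = 0
      · subst hc0; rw [h00, h00]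
      · rw [VMC.stoch_zero (hst _) (h00 _) hc0, VMC.stoch_zero (hst _) (h00 _) hc0]
    · have hKp' : projK (n + 1) (K (n + 1).succPNat) = K n.succPNat := hKp
      rw [← hKp']
      simp only [projK]
      rw [if_pos ⟨by omega, hb⟩, if_pos hcN]
      by_cases h : K (n + 1).succPNat (n + 1 + 1) (n + 1 + 1) < 1
      · rw [if_pos h, hC1 h, mul_div_assoc]
      · rw [if_neg h, hC2 h]
        split_ifs with hc0
        · subst hc0; ring
        · ring
  obtain ⟨P, hP, hlaw, hae⟩ := VMC.glue μ (fun n => proj (n + 1))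
    (fun n => VMC.measurable_proj (n + 1)) hproj
  have hMC : ∀ N : ℕ+, IsMarkovChain P (fun i ω => ω N.natPred i) (ν N) (K N) := by
    intro N
    obtain ⟨n, rfl⟩ : ∃ n : ℕ, N = n.succPNat := ⟨N.natPred, (PNat.succPNat_natPred N).symm⟩
    rw [Nat.natPred_succPNat]
    refine ⟨fun i => by fun_prop, fun l a => ?_⟩
    have h1 : P {ω | ∀ i ≤ l, ω n i = a i} = μ n (VMC.cyl l a) := by
      rw [← hlaw n, Measure.map_apply (by fun_prop) (VMC.meas_cyl l a)]
      rfl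
    rw [h1]
    simp only [μ]
    rw [VMC.mix_cyl (n + 1) _ _ _ (hν.1 _) (hν.2.2.1 n.succPNat)]
    congr 2
    rw [Finset.range_eq_Ico, ← Finset.Ico_add_one_right_eq_Icc,
      Finset.prod_Ico_eq_prod_range, Finset.prod_Ico_eq_prod_range]
    refine Finset.prod_congr (by simp) fun k _ => ?_
    congr 2 <;> omega
  refine ⟨ℕ → ℕ → ℕ, inferInstance, P, fun ω N => ω N.natPred, hP, ⟨?_, fun N => ?_⟩, hMC⟩
  · have hps : ∀ᵐ ω ∂P, ∀ n : ℕ, ω n ∈ PathSpaceN (n + 1) := by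
      rw [ae_all_iff]
      intro n
      have h1 : ∀ᵐ x ∂(P.map fun ω => ω n), x ∈ PathSpaceN (n + 1) := by
        rw [hlaw n]
        exact VMC.mix_pathSpace _ _ _ _ (h00 _) (hsupp n.succPNat)
      exact ae_of_ae_map (measurable_pi_apply n).aemeasurable h1
    filter_upwards [hps, hae] with ω h1 h2
    constructor
    · intro N
      have := h1 N.natPred
      rwa [PNat.natPred_add_one] at this
    · intro N
      have := h2 N.natPred
      rwa [PNat.natPred_add_one] at this
  · refine ⟨ν N, K N, ⟨hν.1 N, ?_⟩, hν.2.2.1 N, hK.1 N, hMC N⟩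
    rw [← hν.2.1 N]
    refine hasSum_sum_of_ne_finset_zero fun b hb => hν.2.2.1 N b ?_
    simpa [Nat.lt_succ_iff] using hb
end
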